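/- arXiv:1105.2076 — 2 statements merged into one kernel-verified Lean document; each statement's English description precedes it below -/
import Mathlib

section
/- Let w ≥ 3 be an integer. (a) If w is even then V_{w,3} = S_{w,3}; in particular every multiple zeta value ζ(a,b,c) with a+b+c = w, c ≥ 2, is a ℚ-linear combination of monomials of weight < w, monomials of depth ≤ 2, and products of two monomials of positive weight with total weight ≤ w and total depth ≤ 3. (b) If w is odd and w ≥ 5 then dim_ℚ (V_{w,3}/S_{w,3}) ≤ ⌊((w−3)²−1)/48⌋. -/
/-- The multiple zeta value `ζ(n_1,…,n_p) = Σ_{0<k_1<⋯<k_p} 1/(k_1^{n_1}⋯k_p^{n_p})`. -/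
noncomputable def mzv (p : ℕ) (n : Fin p → ℕ) : ℝ :=
  ∑' k : {k : Fin p → ℕ // StrictMono k ∧ ∀ i, 0 < k i},
    ∏ i, (((k.1 i : ℝ)) ^ (n i))⁻¹

/-- An index (composition) `(n_1,…,n_{p+1})` for a multiple zeta value. -/
abbrev MZIndex : Type := (p : ℕ) × (Fin (p + 1) → ℕ)

/-- Admissibility: all `n_i ≥ 1` and the last entry is `≥ 2`. -/
def MZIndex.Admissible (z : MZIndex) : Prop :=
  (∀ i, 1 ≤ z.2 i) ∧ 2 ≤ z.2 (Fin.last z.1)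

/-- The weight `n_1 + ⋯ + n_{p+1}` of an index. -/
def MZIndex.weight (z : MZIndex) : ℕ := ∑ i, z.2 i

/-- The depth `p + 1` of an index. -/
def MZIndex.depth (z : MZIndex) : ℕ := z.1 + 1

/-- `x` is a monomial of weight `w'` and depth `m'`: `x = π^{2a}·ζ(s⁽¹⁾)⋯ζ(s⁽ᵏ⁾)` with
admissible indices `s⁽ⁱ⁾`, `w' = 2a + Σ weights`, `m' = Σ depths`. -/
def IsMonomial (x : ℝ) (w' m' : ℕ) : Prop :=
  ∃ (a : ℕ) (zs : List MZIndex), (∀ z ∈ zs, z.Admissible) ∧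
    x = Real.pi ^ (2 * a) * (zs.map fun z => mzv (z.1 + 1) z.2).prod ∧
    w' = 2 * a + (zs.map MZIndex.weight).sum ∧
    m' = (zs.map MZIndex.depth).sum

/-- `V_{w,m}`: the ℚ-span of all monomials of weight `≤ w` and depth `≤ m`. -/
noncomputable def Vspan (w m : ℕ) : Submodule ℚ ℝ :=
  Submodule.span ℚ {x | ∃ w' m', w' ≤ w ∧ m' ≤ m ∧ IsMonomial x w' m'}

/-- `S_{w,m} = V_{w−1,m} + V_{w,m−1} + Σ V_{w₁,m₁}·V_{w₂,m₂}` (sum over `w₁,w₂ ≥ 1`,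
`w₁+w₂ ≤ w`, `m₁+m₂ ≤ m`). -/
noncomputable def Sspan (w m : ℕ) : Submodule ℚ ℝ :=
  Vspan (w - 1) m ⊔ Vspan w (m - 1) ⊔
    ⨆ (w₁ : ℕ) (w₂ : ℕ) (m₁ : ℕ) (m₂ : ℕ) (_ : 1 ≤ w₁) (_ : 1 ≤ w₂)
      (_ : w₁ + w₂ ≤ w) (_ : m₁ + m₂ ≤ m),
      Submodule.span ℚ {x | ∃ y ∈ Vspan w₁ m₁, ∃ z ∈ Vspan w₂ m₂, x = y * z}

/-!
A `ℚ`-linear functional on `ℝ` which kills `S_{w,3}` sees only the terms of depth three in the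
stuffle and shuffle expansions of `ζ(a) ζ(b, c)`. Hence the generating polynomial `f(x, y, z)` of
its values on the triple zeta values, which is homogeneous of degree `w - 3`, and its transform
`f♯(x, y, z) = f(x, x + y, x + y + z)` both vanish on the shuffles of `x` with `y z`. In coordinates
`a, b, c` adapted to the symmetries of an octahedron this says that `f` is invariant under the
changes of signs and under the swap of `a` and `b`, and that its cyclic sum as well as that of its
rotation `f(a + b, b - a, c)` vanishes.

If `w` is even then `f` is even of odd degree, so it vanishes and `V_{w,3} = S_{w,3}`. If `w` is
odd, the two cyclic sum conditions cut out two subspaces which together span the space of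
invariants: a functional killing both is encoded by a polynomial invariant under an infinite group,
which has to be zero. Hence the dimension of the space of solutions is that of the space of
invariants minus twice the rank of the cyclic sum on it, and both are found by counting exponents.
-/

open Finset

section ShuffleRelations

variable {A M : Type*}

/-- The relations `f x y z + f y x z + f y z x = 0`: a function of three variables vanishes on the
shuffles of a letter `x` with a word `y z`. -/
def IsShuffleZero [AddCommGroup M] (f : A → A → A → M) : Prop :=
  ∀ x y z, f x y z + f y x z + f y z x = 0

/-- Goncharov's `f♯`: the change of variables under which the shuffle product of multiple zeta
values becomes the shuffle of variables. -/
def sharp [Add A] (f : A → A → A → M) (x y z : A) : M := f x (x + y) (x + y + z)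

/-- The function `f` in coordinates in which the symmetric group on the four points `0, x, y, z`,
together with `-1`, acts by signed permutations. -/
def octahedral [Add A] (f : A → A → A → M) (a b c : A) : M := f (b + c) (a + b) (a + c)

theorem IsShuffleZero.reverse [AddCommGroup M] {f : A → A → A → M} (h : IsShuffleZero f)
    (x y z : A) : f z y x = f x y z := by
  have h' := (h z y x).trans (h x y z).symm
  rwa [add_right_comm, add_assoc, add_assoc, add_left_inj] at h'

variable [AddCommGroup A] {K : Type*}

section CommRing

variable [CommRing K] {f : A → A → A → K}

theorem octahedral_swap (hS : IsShuffleZero f) (a b c : A) :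
    octahedral f b a c = octahedral f a b c := by
  rw [octahedral, octahedral, hS.reverse, add_comm a b]

theorem octahedral_neg_left (hS : IsShuffleZero f) (hT : IsShuffleZero (sharp f)) (a b c : A) :
    octahedral f (-a) b c = octahedral f a b c := by
  have hrev : f (c - a) (b - a) (b + c) = f (a + c) (a + b) (b + c) := by
    convert hT.reverse (a + c) (b - c) (c - a) using 1 <;>
      simp only [sharp] <;> congr 1 <;> abel
  rw [octahedral, octahedral, hS.reverse (a + c), ← hrev, hS.reverse (b + c),
    neg_add_eq_sub, neg_add_eq_sub]

theorem octahedral_neg_middle (hS : IsShuffleZero f) (hT : IsShuffleZero (sharp f)) (a b c : A) :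
    octahedral f a (-b) c = octahedral f a b c := by
  rw [octahedral_swap hS, octahedral_neg_left hS hT, octahedral_swap hS]

theorem octahedral_cyclic_sum (hS : IsShuffleZero f) (a b c : A) :
    octahedral f a b c + octahedral f b c a + octahedral f c a b = 0 := by
  simp only [octahedral]
  rw [add_comm c a, add_comm b a, add_comm c b]
  linear_combination hS (b + c) (a + b) (a + c) + hS.reverse (a + b) (b + c) (a + c)

theorem octahedral_neg_right (hS : IsShuffleZero f) (hT : IsShuffleZero (sharp f)) (a b c : A) :
    octahedral f a b (-c) = octahedral f a b c := by
  have h := octahedral_cyclic_sum hS a b (-c)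
  rw [octahedral_neg_middle hS hT, octahedral_neg_left hS hT] at h
  linear_combination h - octahedral_cyclic_sum hS a b c

theorem octahedral_rotated_cyclic_sum (hT : IsShuffleZero (sharp f)) (a b c : A) :
    octahedral f (a + b) (b - a) c + octahedral f (b + c) (c - b) a +
      octahedral f (c + a) (a - c) b = 0 := by
  have hsharp (a b c : A) :
      octahedral f (a + b) (b - a) c = sharp f (b + c - a) (a + b - c) (a + c - b) := by
    simp only [octahedral, sharp]
    congr 1 <;> abel
  rw [hsharp, hsharp, hsharp, add_comm c a, add_comm c b, add_comm b a]
  linear_combination hT (b + c - a) (a + b - c) (a + c - b) +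
    hT.reverse (a + b - c) (b + c - a) (a + c - b)

end CommRing

-- If the shuffle relations of `sharp f` fail by a function not depending on the last variable, then
-- this function is determined by its values `r x 0`, which are linked to the values of `f` at
-- points with coordinates `0` and `x` and to `r (-x) 0`.
theorem isShuffleZero_sharp_of_const [Field K] [CharZero K] {f : A → A → A → K}
    (hS : IsShuffleZero f) (r : A → A → K)
    (hr : ∀ x y z, sharp f x y z + sharp f y x z + sharp f y z x = r x y) :
    IsShuffleZero (sharp f) := by
  have h0 : r 0 0 = 0 := by
    have h := hr 0 0 0
    simp only [sharp, add_zero] at h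
    linear_combination hS 0 0 0 - h
  have hsymm (x y) : r x y = r 0 x + r 0 y - r x 0 := by
    linear_combination hr 0 x y + hr 0 y x - hr x 0 y - hr x y 0
  have hzero (x) : r 0 x = 2 * r x 0 := by
    linear_combination -hsymm x 0 - h0
  have hxx (x) : f 0 x x = 2 * r x 0 := by
    have h := hr 0 x 0
    simp only [sharp, add_zero, zero_add] at h
    linear_combination h - 2 / 3 * hS x x x + hzero x
  have h00 (x) : f 0 0 x = -r x 0 := by
    have h := hr 0 0 x
    simp only [sharp, add_zero, zero_add] at h
    linear_combination (h - hxx x + h0) / 2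
  have h0x0 (x) : f 0 x 0 = 2 * r x 0 := by
    linear_combination hS 0 0 x - 2 * h00 x
  have hneg (x) : 3 * r x 0 + 2 * r (-x) 0 = 0 := by
    have h := hr x 0 (-x)
    simp only [sharp, add_zero, zero_add, add_neg_cancel, neg_add_cancel] at h
    linear_combination h - hS.reverse 0 x x - hxx x - h0x0 x - h0x0 (-x)
  have hleft (x) : r x 0 = 0 := by
    have h := hneg (-x)
    rw [neg_neg] at h
    linear_combination (3 * hneg x - 2 * h) / 5
  intro x y z
  rw [hr, hsymm, hzero, hzero, hleft, hleft, mul_zero, add_zero, sub_zero]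

end ShuffleRelations

section PolynomialFunctions

open MvPolynomial

/-- The exponents `(i, j, k)` of the monomials of degree `d` in three variables. -/
def triples (d : ℕ) : Finset (ℕ × ℕ × ℕ) :=
  {m ∈ range (d + 1) ×ˢ range (d + 1) ×ˢ range (d + 1) | m.1 + m.2.1 + m.2.2 = d}

theorem mem_triples {d : ℕ} {m : ℕ × ℕ × ℕ} : m ∈ triples d ↔ m.1 + m.2.1 + m.2.2 = d := by
  simp only [triples, mem_filter, mem_product, mem_range]
  omega

theorem sum_triples_eq_sum_antidiagonal {M : Type*} [AddCommMonoid M] (d : ℕ)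
    (F : ℕ → ℕ → ℕ → M) :
    ∑ m ∈ triples d, F m.1 m.2.1 m.2.2 =
      ∑ p ∈ antidiagonal d, ∑ q ∈ antidiagonal p.1, F q.1 q.2 p.2 := by
  rw [sum_sigma']
  refine sum_bij' (fun m _ ↦ ⟨(m.1 + m.2.1, m.2.2), (m.1, m.2.1)⟩)
    (fun s _ ↦ (s.2.1, s.2.2, s.1.2)) ?_ ?_ (fun _ _ ↦ rfl) ?_ (fun _ _ ↦ rfl)
  · intro m hm
    simpa using mem_triples.1 hm
  · rintro ⟨⟨n, k⟩, i, j⟩ hs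
    simp only [mem_sigma, HasAntidiagonal.mem_antidiagonal] at hs
    exact mem_triples.2 (by rw [hs.2, hs.1])
  · rintro ⟨⟨n, k⟩, i, j⟩ hs
    simp only [mem_sigma, HasAntidiagonal.mem_antidiagonal] at hs
    obtain ⟨-, rfl⟩ := hs
    rfl

variable {R : Type*} [CommRing R] {d : ℕ} {F : R → R → R → R}

/-- The monomial `x ^ i * y ^ j * z ^ k` as a function of `x`, `y`, `z`. -/
def monomialFun (m : ℕ × ℕ × ℕ) (x y z : R) : R := x ^ m.1 * y ^ m.2.1 * z ^ m.2.2

/-- A triple of exponents as an exponent vector of `MvPolynomial (Fin 3) R`. -/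
noncomputable def exponent (m : ℕ × ℕ × ℕ) : Fin 3 →₀ ℕ :=
  Finsupp.equivFunOnFinite.symm ![m.1, m.2.1, m.2.2]

theorem exponent_injective : Function.Injective exponent := by
  intro m n h
  have h' := Finsupp.equivFunOnFinite.symm.injective h
  simp only [Matrix.vecCons_inj, and_true] at h'
  exact Prod.ext h'.1 (Prod.ext h'.2.1 h'.2.2)

theorem exponent_apply (n : Fin 3 →₀ ℕ) : exponent (n 0, n 1, n 2) = n := by
  ext i
  fin_cases i <;> rfl

theorem degree_exponent (m : ℕ × ℕ × ℕ) : (exponent m).degree = m.1 + m.2.1 + m.2.2 := by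
  simp [Finsupp.degree_eq_sum, Fin.sum_univ_three, exponent]

/-- The evaluation of a polynomial in three variables as a function of these variables. -/
noncomputable def evalFun : MvPolynomial (Fin 3) R →ₗ[R] (R → R → R → R) where
  toFun p x y z := eval ![x, y, z] p
  map_add' p q := by ext; simp
  map_smul' c p := by ext; simp [smul_eval]

theorem evalFun_monomial (m : ℕ × ℕ × ℕ) (c : R) :
    evalFun (monomial (exponent m) c) = c • monomialFun m := by
  ext x y z
  simp [evalFun, eval_monomial, exponent, monomialFun, Finsupp.prod_fintype, Fin.prod_univ_three]

theorem evalFun_injective [IsDomain R] [Infinite R] :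
    Function.Injective (evalFun : MvPolynomial (Fin 3) R → R → R → R → R) := by
  intro p q h
  refine MvPolynomial.funext fun x ↦ ?_
  have hx : x = ![x 0, x 1, x 2] := by
    ext i
    fin_cases i <;> rfl
  rw [hx]
  exact congrFun₃ h (x 0) (x 1) (x 2)

/-- The polynomial function of degree `d` with coefficients `t i j k`, `i + j + k = d`. -/
def polyFun (d : ℕ) : (ℕ → ℕ → ℕ → R) →ₗ[R] (R → R → R → R) where
  toFun t := ∑ m ∈ triples d, t m.1 m.2.1 m.2.2 • monomialFun m
  map_add' s t := by simp only [Pi.add_apply, add_smul, sum_add_distrib]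
  map_smul' c t := by
    simp only [Pi.smul_apply, smul_eq_mul, mul_smul, smul_sum, RingHom.id_apply]

theorem polyFun_eq_sum (d : ℕ) (t : ℕ → ℕ → ℕ → R) :
    polyFun d t = ∑ m ∈ triples d, t m.1 m.2.1 m.2.2 • monomialFun m := rfl

theorem polyFun_apply (d : ℕ) (t : ℕ → ℕ → ℕ → R) (x y z : R) :
    polyFun d t x y z = ∑ m ∈ triples d, t m.1 m.2.1 m.2.2 * (x ^ m.1 * y ^ m.2.1 * z ^ m.2.2) := by
  simp [polyFun_eq_sum, monomialFun, Finset.sum_apply]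

theorem coeff_eq_zero_of_polyFun_eq_zero [IsDomain R] [Infinite R] {t : ℕ → ℕ → ℕ → R}
    (h : polyFun d t = 0) {i j k : ℕ} (hd : i + j + k = d) : t i j k = 0 := by
  have hp : ∑ m ∈ triples d, monomial (exponent m) (t m.1 m.2.1 m.2.2) = 0 :=
    evalFun_injective <| by
      simpa only [map_sum, evalFun_monomial, map_zero] using (polyFun_eq_sum d t).symm.trans h
  have hc := congrArg (coeff (exponent (i, j, k))) hp
  rwa [coeff_sum, sum_eq_single_of_mem (i, j, k) (mem_triples.2 hd) fun m _ hm ↦ by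
    rw [coeff_monomial, if_neg (exponent_injective.ne hm)], coeff_monomial, if_pos rfl] at hc

variable (R) in
/-- The homogeneous polynomial functions of degree `d` in three variables. -/
noncomputable def homogeneousFun (d : ℕ) : Submodule R (R → R → R → R) :=
  (homogeneousSubmodule (Fin 3) R d).map evalFun

theorem monomialFun_mem_homogeneousFun {m : ℕ × ℕ × ℕ} (hm : m ∈ triples d) :
    monomialFun m ∈ homogeneousFun R d := by
  refine ⟨monomial (exponent m) 1, isHomogeneous_monomial _ ?_, ?_⟩
  · rw [degree_exponent, mem_triples.1 hm]
  · rw [evalFun_monomial, one_smul]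

variable (R) in
theorem homogeneousFun_eq_span (d : ℕ) :
    homogeneousFun R d = Submodule.span R (monomialFun '' triples d) := by
  refine le_antisymm ?_ (Submodule.span_le.2 ?_)
  · rintro _ ⟨p, hp, rfl⟩
    rw [p.as_sum, map_sum]
    refine Submodule.sum_mem _ fun n hn ↦ ?_
    have hdeg : n.degree = d := by
      by_contra h
      exact mem_support_iff.1 hn (hp.coeff_eq_zero h)
    rw [← exponent_apply n, degree_exponent] at hdeg
    rw [← exponent_apply n, evalFun_monomial]
    exact Submodule.smul_mem _ _ (Submodule.subset_span ⟨_, mem_triples.2 hdeg, rfl⟩)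
  · rintro _ ⟨m, hm, rfl⟩
    exact monomialFun_mem_homogeneousFun hm

theorem polyFun_mem_homogeneousFun (d : ℕ) (t : ℕ → ℕ → ℕ → R) :
    polyFun d t ∈ homogeneousFun R d :=
  Submodule.sum_mem _ fun _ hm ↦ Submodule.smul_mem _ _ (monomialFun_mem_homogeneousFun hm)

/-- The linear form with coefficients `v`. -/
def linearForm (v : R × R × R) (x y z : R) : R := v.1 * x + v.2.1 * y + v.2.2 * z

theorem homogeneousFun_comp_linearForm (hF : F ∈ homogeneousFun R d) (u v w : R × R × R) :
    (fun x y z ↦ F (linearForm u x y z) (linearForm v x y z) (linearForm w x y z)) ∈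
      homogeneousFun R d := by
  obtain ⟨p, hp, rfl⟩ := hF
  let L (v : R × R × R) : MvPolynomial (Fin 3) R := C v.1 * X 0 + C v.2.1 * X 1 + C v.2.2 * X 2
  have hL (v) : (L v).IsHomogeneous 1 :=
    ((isHomogeneous_C_mul_X _ _).add (isHomogeneous_C_mul_X _ _)).add (isHomogeneous_C_mul_X _ _)
  refine ⟨aeval ![L u, L v, L w] p, ?_, ?_⟩
  · have h := hp.aeval ![L u, L v, L w] (n := 1) fun i ↦ by fin_cases i <;> exact hL _
    rwa [one_mul] at h
  · ext x y z
    change eval ![x, y, z] (aeval ![L u, L v, L w] p) = eval _ p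
    rw [← coe_aeval_eq_eval, ← coe_aeval_eq_eval, RingHom.coe_coe, RingHom.coe_coe,
      ← AlgHom.comp_apply, comp_aeval]
    congr 2
    ext i
    fin_cases i <;> simp [L, linearForm]

theorem homogeneousFun_smul (hF : F ∈ homogeneousFun R d) (t x y z : R) :
    F (t * x) (t * y) (t * z) = t ^ d * F x y z := by
  rw [homogeneousFun_eq_span] at hF
  induction hF using Submodule.span_induction with
  | mem G hG =>
    obtain ⟨m, hm, rfl⟩ := hG
    rw [monomialFun, monomialFun, ← mem_triples.1 hm]
    ring
  | zero => simp
  | add G H _ _ hG hH => simp only [Pi.add_apply, hG, hH, mul_add]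
  | smul c G _ hG =>
    simp only [Pi.smul_apply, smul_eq_mul, hG]
    ring

theorem exists_eval_eq_homogeneousFun_line (hF : F ∈ homogeneousFun R d) (x y z a b c : R) :
    ∃ P : Polynomial R, ∀ t, P.eval t = F (x + t * a) (y + t * b) (z + t * c) := by
  obtain ⟨p, -, rfl⟩ := hF
  let L (x a : R) : Polynomial R := .C x + .X * .C a
  refine ⟨aeval ![L x a, L y b, L z c] p, fun t ↦ ?_⟩
  change _ = eval _ p
  rw [← Polynomial.coe_aeval_eq_eval, ← coe_aeval_eq_eval, RingHom.coe_coe,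
    ← AlgHom.comp_apply, comp_aeval]
  congr 2
  ext i
  fin_cases i <;> simp [L, mul_comm t]

theorem linearForm_pow (d : ℕ) (x y z : R) :
    linearForm (x, y, z) ^ d =
      polyFun d fun i j k ↦ d.choose (i + j) * (i + j).choose i * (x ^ i * y ^ j * z ^ k) := by
  ext a b c
  rw [polyFun_apply, sum_triples_eq_sum_antidiagonal d fun i j k ↦
    (d.choose (i + j) * (i + j).choose i * (x ^ i * y ^ j * z ^ k)) * (a ^ i * b ^ j * c ^ k),
    Pi.pow_apply, Pi.pow_apply, Pi.pow_apply, linearForm, (Commute.all _ _).add_pow']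
  refine sum_congr rfl fun p _ ↦ ?_
  rw [(Commute.all _ _).add_pow', sum_mul, smul_sum]
  refine sum_congr rfl fun q hq ↦ ?_
  rw [HasAntidiagonal.mem_antidiagonal.1 hq]
  simp only [nsmul_eq_mul]
  ring

end PolynomialFunctions

section TwistInvariance

variable {K : Type*} [Field K] {d : ℕ} {q : K → K → K → K}

/-- Invariance under the signed permutations of the variables and under one further linear map,
which together generate an infinite group. -/
structure IsTwistInvariant (q : K → K → K → K) : Prop where
  swap : ∀ x y z, q y x z = q x y z
  cycle : ∀ x y z, q z x y = q x y z
  neg_left : ∀ x y z, q (-x) y z = q x y z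
  twist : ∀ x y z, q ((x - y + z) / 2) ((x - y - z) / 2) (x + y) = q x y z

namespace IsTwistInvariant

theorem swap_right (h : IsTwistInvariant q) (x y z : K) : q x z y = q x y z := by
  rw [← h.cycle, h.swap, h.cycle]

theorem neg_middle (h : IsTwistInvariant q) (x y z : K) : q x (-y) z = q x y z := by
  rw [← h.swap, h.neg_left, h.swap]

variable [CharZero K]

theorem translate (h : IsTwistInvariant q) (x y z : K) :
    q x (y + (y + z - x) / 2) (z - (y + z - x) / 2) = q x y z := by
  have h1 := h.twist x (-y) z
  have h2 := h.twist ((x + y + z) / 2) (-(x - y)) ((x + y - z) / 2)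
  rw [h.neg_middle] at h1 h2
  rw [h.swap_right, ← h1, h.swap_right _ (x + -y)]
  convert h2 using 2 <;> ring

theorem translate_nat_mul (h : IsTwistInvariant q) (x y z : K) (n : ℕ) :
    q x (y + n * ((y + z - x) / 2)) (z - n * ((y + z - x) / 2)) = q x y z := by
  induction n with
  | zero => simp
  | succ n ih =>
    rw [← ih, ← h.translate x (y + n * ((y + z - x) / 2))]
    push_cast
    congr 1 <;> ring

theorem eq_on_line_of_ne (h : IsTwistInvariant q) (hq : q ∈ homogeneousFun K d) {x y z : K}
    (hne : y + z ≠ x) (t : K) : q x (y + t) (z - t) = q x y z := by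
  obtain ⟨P, hP⟩ := exists_eval_eq_homogeneousFun_line hq x y z 0 1 (-1)
  simp only [mul_zero, add_zero, mul_one, mul_neg, ← sub_eq_add_neg] at hP
  have hstep : (y + z - x) / 2 ≠ 0 := div_ne_zero (sub_ne_zero.2 hne) two_ne_zero
  have hPC : P = Polynomial.C (q x y z) := by
    refine Polynomial.eq_of_infinite_eval_eq _ _ ((Set.infinite_range_of_injective
      ((mul_left_injective₀ hstep).comp (Nat.cast_injective (R := K)))).mono ?_)
    rintro _ ⟨n, rfl⟩
    simp [hP, h.translate_nat_mul]
  rw [← hP, hPC, Polynomial.eval_C]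

theorem eq_on_line (h : IsTwistInvariant q) (hq : q ∈ homogeneousFun K d) {x : K} (hx : x ≠ 0)
    (y z t : K) : q x (y + t) (z - t) = q x y z := by
  by_cases hyz : y + z = x
  · have hne : y + z ≠ -x := fun h' ↦ hx (self_eq_neg.1 (hyz.symm.trans h'))
    rw [← h.neg_left, h.eq_on_line_of_ne hq hne, h.neg_left]
  · exact h.eq_on_line_of_ne hq hyz t

theorem eq_on_axis (h : IsTwistInvariant q) (hq : q ∈ homogeneousFun K d) {x : K} (hx : x ≠ 0)
    (y z : K) : q x y z = q x 0 0 := by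
  have h1 := h.eq_on_line hq hx y z (-y)
  have h2 := h.eq_on_line hq hx 0 (y + z) ((y + z) / 2)
  have h3 := h.eq_on_line hq hx 0 0 (-((y + z) / 2))
  rw [zero_add, h.neg_middle] at h3
  rw [← h1, ← h3]
  rw [zero_add] at h2
  convert h2.symm using 2 <;> ring

theorem eq_zero_on_axis (h : IsTwistInvariant q) (hq : q ∈ homogeneousFun K d) (hd : d ≠ 0)
    (x : K) : q x 0 0 = 0 := by
  have hscale : q 1 0 0 = 2 ^ d * q 1 0 0 := by
    rw [← homogeneousFun_smul hq, mul_zero, ← h.eq_on_axis hq (x := 2 * 1) (by simp) 1 0,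
      h.swap 1 (2 * 1), h.eq_on_axis hq one_ne_zero (2 * 1) 0]
  have h2 : (2 : K) ^ d ≠ 1 := by exact_mod_cast (Nat.one_lt_two_pow hd).ne'
  have h1 : q 1 0 0 = 0 := by
    by_contra h0
    exact h2 ((mul_eq_right₀ h0).1 hscale.symm)
  simpa [h1] using homogeneousFun_smul hq x 1 0 0

theorem eq_zero (h : IsTwistInvariant q) (hq : q ∈ homogeneousFun K d) (hd : d ≠ 0) : q = 0 := by
  have hleft {x : K} (hx : x ≠ 0) (y z) : q x y z = 0 := by
    rw [h.eq_on_axis hq hx, h.eq_zero_on_axis hq hd]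
  ext x y z
  by_cases hx : x = 0
  · by_cases hy : y = 0
    · rw [← h.cycle, hx, hy, h.eq_zero_on_axis hq hd, Pi.zero_apply, Pi.zero_apply, Pi.zero_apply]
    · exact (h.swap x y z).symm.trans (hleft hy x z)
  · exact hleft hx y z

end IsTwistInvariant

end TwistInvariance

section PowerPairing

variable {R : Type*} [CommRing R] {d : ℕ} {Λ : Module.Dual R (R → R → R → R)}

/-- A linear form on functions of three variables, applied to the `d`-th powers of linear forms
and considered as a function of the coefficients of the latter. -/
def powerPairing (d : ℕ) (Λ : Module.Dual R (R → R → R → R)) (x y z : R) : R :=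
  Λ (linearForm (x, y, z) ^ d)

theorem powerPairing_eq_polyFun (d : ℕ) (Λ : Module.Dual R (R → R → R → R)) :
    powerPairing d Λ = polyFun d fun i j k ↦
      d.choose (i + j) * (i + j).choose i * Λ (monomialFun (i, j, k)) := by
  ext x y z
  rw [powerPairing, linearForm_pow, polyFun_apply, polyFun_eq_sum, map_sum]
  refine sum_congr rfl fun m _ ↦ ?_
  rw [map_smul, smul_eq_mul, mul_right_comm]

theorem apply_eq_zero_of_powerPairing_eq_zero [IsDomain R] [CharZero R]
    (h : powerPairing d Λ = 0) {F : R → R → R → R} (hF : F ∈ homogeneousFun R d) : Λ F = 0 := by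
  suffices homogeneousFun R d ≤ LinearMap.ker Λ from this hF
  rw [homogeneousFun_eq_span, Submodule.span_le]
  rintro _ ⟨⟨i, j, k⟩, hm, rfl⟩
  have hd : i + j + k = d := mem_triples.1 hm
  rw [powerPairing_eq_polyFun] at h
  have hcoeff := coeff_eq_zero_of_polyFun_eq_zero h hd
  have h1 : d.choose (i + j) ≠ 0 := Nat.choose_ne_zero (by omega)
  have h2 : (i + j).choose i ≠ 0 := Nat.choose_ne_zero (by omega)
  exact (mul_eq_zero.1 hcoeff).resolve_left
    (mul_ne_zero (Nat.cast_ne_zero.2 h1) (Nat.cast_ne_zero.2 h2))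

end PowerPairing

section SignSwapInvariants

variable {K : Type*} [Field K] {d : ℕ} {F : K → K → K → K}

/-- The sum over the cyclic permutations of the variables. -/
def cyclicSum : (K → K → K → K) →ₗ[K] (K → K → K → K) where
  toFun F a b c := F a b c + F b c a + F c a b
  map_add' F G := by
    ext a b c
    simp only [Pi.add_apply]
    ring
  map_smul' r F := by
    ext a b c
    simp only [Pi.smul_apply, smul_eq_mul, RingHom.id_apply]
    ring

/-- The rotation by `π / 4`, up to scaling, of the first two variables. -/
def rotate : (K → K → K → K) →ₗ[K] (K → K → K → K) where
  toFun F a b c := F (a + b) (b - a) c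
  map_add' _ _ := rfl
  map_smul' _ _ := rfl

/-- The sum over all changes of signs of the variables. -/
def signSum (F : K → K → K → K) (a b c : K) : K :=
  F a b c + F (-a) b c + F a (-b) c + F (-a) (-b) c +
    (F a b (-c) + F (-a) b (-c) + F a (-b) (-c) + F (-a) (-b) (-c))

/-- The sum over all changes of signs and over the swap of the first two variables. -/
def signSwapSum : (K → K → K → K) →ₗ[K] (K → K → K → K) where
  toFun F a b c := signSum F a b c + signSum F b a c
  map_add' F G := by
    ext a b c
    simp only [signSum, Pi.add_apply]
    ring
  map_smul' r F := by
    ext a b c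
    simp only [signSum, Pi.smul_apply, smul_eq_mul, RingHom.id_apply]
    ring

theorem cyclicSum_apply (F : K → K → K → K) (a b c : K) :
    cyclicSum F a b c = F a b c + F b c a + F c a b := rfl

theorem rotate_apply (F : K → K → K → K) (a b c : K) : rotate F a b c = F (a + b) (b - a) c := rfl

theorem signSwapSum_apply (F : K → K → K → K) (a b c : K) :
    signSwapSum F a b c = signSum F a b c + signSum F b a c := rfl

theorem signSwapSum_swap (F : K → K → K → K) :
    signSwapSum (fun a b c ↦ F b a c) = signSwapSum F := by
  ext a b c
  simp only [signSwapSum_apply, signSum]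
  ring

theorem signSwapSum_neg_left (F : K → K → K → K) :
    signSwapSum (fun a b c ↦ F (-a) b c) = signSwapSum F := by
  ext a b c
  simp only [signSwapSum_apply, signSum, neg_neg]
  ring

theorem signSwapSum_neg_middle (F : K → K → K → K) :
    signSwapSum (fun a b c ↦ F a (-b) c) = signSwapSum F := by
  ext a b c
  simp only [signSwapSum_apply, signSum, neg_neg]
  ring

theorem signSwapSum_neg_right (F : K → K → K → K) :
    signSwapSum (fun a b c ↦ F a b (-c)) = signSwapSum F := by
  ext a b c
  simp only [signSwapSum_apply, signSum, neg_neg]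
  ring

theorem cyclicSum_signSwapSum_cycle (F : K → K → K → K) :
    cyclicSum (signSwapSum fun a b c ↦ F b c a) = cyclicSum (signSwapSum F) := by
  ext a b c
  simp only [cyclicSum_apply, signSwapSum_apply, signSum]
  ring

theorem rotate_signSwapSum (F : K → K → K → K) :
    rotate (signSwapSum F) = signSwapSum (rotate F) := by
  ext a b c
  simp only [rotate_apply, signSwapSum_apply, signSum]
  ring_nf

variable (K) in
/-- The homogeneous polynomial functions of degree `d` that are invariant under the changes of
signs of the variables and under the swap of the first two variables. -/
noncomputable def signSwapInvariants (d : ℕ) : Submodule K (K → K → K → K) where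
  carrier := {F | F ∈ homogeneousFun K d ∧ (∀ a b c, F b a c = F a b c) ∧
    (∀ a b c, F (-a) b c = F a b c) ∧ ∀ a b c, F a b (-c) = F a b c}
  zero_mem' := ⟨zero_mem _, fun _ _ _ ↦ rfl, fun _ _ _ ↦ rfl, fun _ _ _ ↦ rfl⟩
  add_mem' := by
    rintro F G ⟨hF, hF₁, hF₂, hF₃⟩ ⟨hG, hG₁, hG₂, hG₃⟩
    refine ⟨add_mem hF hG, fun a b c ↦ ?_, fun a b c ↦ ?_, fun a b c ↦ ?_⟩ <;>
      simp only [Pi.add_apply]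
    exacts [congrArg₂ _ (hF₁ a b c) (hG₁ a b c), congrArg₂ _ (hF₂ a b c) (hG₂ a b c),
      congrArg₂ _ (hF₃ a b c) (hG₃ a b c)]
  smul_mem' := by
    rintro r F ⟨hF, hF₁, hF₂, hF₃⟩
    exact ⟨Submodule.smul_mem _ _ hF, fun a b c ↦ congrArg (r • ·) (hF₁ a b c),
      fun a b c ↦ congrArg (r • ·) (hF₂ a b c), fun a b c ↦ congrArg (r • ·) (hF₃ a b c)⟩

theorem signSwapInvariants_le_homogeneousFun : signSwapInvariants K d ≤ homogeneousFun K d :=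
  fun _ hF ↦ hF.1

theorem neg_middle_of_mem_signSwapInvariants (hF : F ∈ signSwapInvariants K d) (a b c : K) :
    F a (-b) c = F a b c := by
  rw [hF.2.1, hF.2.2.1, hF.2.1]

theorem signSwapSum_of_mem_signSwapInvariants (hF : F ∈ signSwapInvariants K d) :
    signSwapSum F = (16 : K) • F := by
  ext a b c
  simp only [signSwapSum_apply, signSum, hF.2.2.1, hF.2.2.2,
    neg_middle_of_mem_signSwapInvariants hF, hF.2.1 a b c, Pi.smul_apply, smul_eq_mul]
  ring

theorem signSwapSum_mem_signSwapInvariants (hF : F ∈ homogeneousFun K d) :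
    signSwapSum F ∈ signSwapInvariants K d := by
  have hswap {G} (hG : G ∈ homogeneousFun K d) :
      (fun a b c ↦ G b a c) ∈ homogeneousFun K d := by
    simpa [linearForm] using homogeneousFun_comp_linearForm hG (0, 1, 0) (1, 0, 0) (0, 0, 1)
  have hleft {G} (hG : G ∈ homogeneousFun K d) :
      (fun a b c ↦ G (-a) b c) ∈ homogeneousFun K d := by
    simpa [linearForm] using homogeneousFun_comp_linearForm hG (-1, 0, 0) (0, 1, 0) (0, 0, 1)
  have hmiddle {G} (hG : G ∈ homogeneousFun K d) :
      (fun a b c ↦ G a (-b) c) ∈ homogeneousFun K d := by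
    simpa [linearForm] using homogeneousFun_comp_linearForm hG (1, 0, 0) (0, -1, 0) (0, 0, 1)
  have hright {G} (hG : G ∈ homogeneousFun K d) :
      (fun a b c ↦ G a b (-c)) ∈ homogeneousFun K d := by
    simpa [linearForm] using homogeneousFun_comp_linearForm hG (1, 0, 0) (0, 1, 0) (0, 0, -1)
  have hsum {G} (hG : G ∈ homogeneousFun K d) :
      (fun a b c ↦ G a b c + G (-a) b c + G a (-b) c + G (-a) (-b) c) ∈ homogeneousFun K d :=
    add_mem (add_mem (add_mem hG (hleft hG)) (hmiddle hG)) (hleft (hmiddle hG))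
  have hsign : signSum F ∈ homogeneousFun K d := add_mem (hsum hF) (hsum (hright hF))
  refine ⟨add_mem hsign (hswap hsign), fun a b c ↦ ?_, fun a b c ↦ ?_, fun a b c ↦ ?_⟩ <;>
    simp only [signSwapSum_apply, signSum, neg_neg] <;> ring

theorem rotate_mem_signSwapInvariants (hF : F ∈ signSwapInvariants K d) :
    rotate F ∈ signSwapInvariants K d := by
  refine ⟨?_, fun a b c ↦ ?_, fun a b c ↦ ?_, fun a b c ↦ hF.2.2.2 _ _ _⟩
  · have h := homogeneousFun_comp_linearForm hF.1 (1, 1, 0) (-1, 1, 0) (0, 0, 1)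
    simp only [linearForm, zero_mul, one_mul, neg_one_mul, zero_add, add_zero,
      neg_add_eq_sub] at h
    exact h
  · simp only [rotate_apply]
    rw [← neg_sub b a, neg_middle_of_mem_signSwapInvariants hF, add_comm]
  · simp only [rotate_apply]
    rw [hF.2.1, sub_neg_eq_add, neg_add_eq_sub, add_comm]

theorem rotate_injective [CharZero K] :
    Function.Injective (rotate : (K → K → K → K) → K → K → K → K) := by
  intro F G h
  ext a b c
  have h' := congrFun₃ h ((a - b) / 2) ((a + b) / 2) c
  simp only [rotate_apply] at h'
  convert h' using 2 <;> ring

theorem signSwapInvariants_eq_bot_of_odd [CharZero K] (hd : Odd d) :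
    signSwapInvariants K d = ⊥ := by
  refine (Submodule.eq_bot_iff _).2 fun F hF ↦ ?_
  ext a b c
  have hodd : F (-a) (-b) (-c) = -F a b c := by
    simpa [hd.neg_pow] using homogeneousFun_smul hF.1 (-1) a b c
  rw [hF.2.2.1, hF.2.2.2, neg_middle_of_mem_signSwapInvariants hF] at hodd
  exact self_eq_neg.1 hodd

theorem apply_signSwapSum_congr {Λ : Module.Dual K (K → K → K → K)}
    {Φ : (K → K → K → K) →ₗ[K] (K → K → K → K)}
    (h : signSwapInvariants K d ⊓ LinearMap.ker Φ ≤ LinearMap.ker Λ) {F G : K → K → K → K}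
    (hF : F ∈ homogeneousFun K d) (hG : G ∈ homogeneousFun K d)
    (hFG : Φ (signSwapSum F) = Φ (signSwapSum G)) : Λ (signSwapSum F) = Λ (signSwapSum G) := by
  have hker := h ⟨sub_mem (signSwapSum_mem_signSwapInvariants hF)
    (signSwapSum_mem_signSwapInvariants hG), LinearMap.sub_mem_ker_iff.2 hFG⟩
  exact LinearMap.sub_mem_ker_iff.1 hker

theorem isTwistInvariant_powerPairing [CharZero K] {Λ : Module.Dual K (K → K → K → K)}
    (h₁ : signSwapInvariants K d ⊓ LinearMap.ker cyclicSum ≤ LinearMap.ker Λ)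
    (h₂ : signSwapInvariants K d ⊓ LinearMap.ker (cyclicSum ∘ₗ rotate) ≤ LinearMap.ker Λ) :
    IsTwistInvariant (powerPairing d (Λ ∘ₗ signSwapSum)) := by
  have hpow (v : K × K × K) : linearForm v ^ d ∈ homogeneousFun K d := by
    rw [linearForm_pow]
    exact polyFun_mem_homogeneousFun _ _
  refine ⟨fun x y z ↦ congrArg Λ ?_, fun x y z ↦ ?_, fun x y z ↦ congrArg Λ ?_, fun x y z ↦ ?_⟩
  · rw [← signSwapSum_swap]
    congr 1
    ext a b c
    simp only [Pi.pow_apply, linearForm]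
    ring
  · refine apply_signSwapSum_congr h₁ (hpow _) (hpow _) ?_
    rw [← cyclicSum_signSwapSum_cycle (linearForm (x, y, z) ^ d)]
    congr 2
    ext a b c
    simp only [Pi.pow_apply, linearForm]
    ring
  · rw [← signSwapSum_neg_left]
    congr 1
    ext a b c
    simp only [Pi.pow_apply, linearForm]
    ring
  · refine apply_signSwapSum_congr h₂ (hpow _) (hpow _) ?_
    rw [LinearMap.comp_apply, LinearMap.comp_apply, rotate_signSwapSum, rotate_signSwapSum,
      ← cyclicSum_signSwapSum_cycle (rotate (linearForm (x, y, z) ^ d))]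
    congr 2
    ext a b c
    simp only [rotate_apply, Pi.pow_apply, linearForm]
    ring

theorem sup_ker_cyclicSum_eq [CharZero K] (hd : d ≠ 0) :
    (signSwapInvariants K d ⊓ LinearMap.ker cyclicSum) ⊔
      (signSwapInvariants K d ⊓ LinearMap.ker (cyclicSum ∘ₗ rotate)) =
      signSwapInvariants K d := by
  refine le_antisymm (sup_le inf_le_left inf_le_left) fun F hF ↦ ?_
  by_contra hF'
  obtain ⟨Λ, hΛF, hΛ⟩ := Submodule.exists_le_ker_of_notMem hF'
  have hinv := isTwistInvariant_powerPairing (le_sup_left.trans hΛ) (le_sup_right.trans hΛ)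
  have hmem : powerPairing d (Λ ∘ₗ signSwapSum) ∈ homogeneousFun K d := by
    rw [powerPairing_eq_polyFun]
    exact polyFun_mem_homogeneousFun _ _
  have hzero := apply_eq_zero_of_powerPairing_eq_zero (hinv.eq_zero hmem hd) hF.1
  rw [LinearMap.comp_apply, signSwapSum_of_mem_signSwapInvariants hF, map_smul] at hzero
  exact hΛF ((smul_eq_zero.1 hzero).resolve_left (by norm_num))

variable (K) in
/-- The sign and swap invariant functions whose cyclic sum, as well as that of their rotation,
vanishes: the octahedral form of the solutions of the linearized double shuffle equations. -/
noncomputable def dihedralFun (d : ℕ) : Submodule K (K → K → K → K) :=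
  (signSwapInvariants K d ⊓ LinearMap.ker cyclicSum) ⊓
    (signSwapInvariants K d ⊓ LinearMap.ker (cyclicSum ∘ₗ rotate))

instance (d : ℕ) : Module.Finite K (homogeneousFun K d) := by
  rw [homogeneousFun_eq_span]
  exact Module.Finite.span_of_finite K ((triples d).finite_toSet.image _)

instance (d : ℕ) : Module.Finite K (signSwapInvariants K d) :=
  Submodule.finiteDimensional_of_le signSwapInvariants_le_homogeneousFun

instance (d : ℕ) : Module.Finite K (dihedralFun K d) :=
  Submodule.finiteDimensional_of_le (S₂ := signSwapInvariants K d) (inf_le_left.trans inf_le_left)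

theorem map_rotate_signSwapInvariants [CharZero K] (d : ℕ) :
    (signSwapInvariants K d).map rotate = signSwapInvariants K d := by
  refine Submodule.eq_of_le_of_finrank_eq ?_
    (LinearEquiv.finrank_eq (Submodule.equivMapOfInjective _ rotate_injective _)).symm
  rintro _ ⟨F, hF, rfl⟩
  exact rotate_mem_signSwapInvariants hF

theorem finrank_map_add_finrank_inf_ker {V W : Type*} [AddCommGroup V] [Module K V]
    [AddCommGroup W] [Module K W] (f : V →ₗ[K] W) (p : Submodule K V) [Module.Finite K p] :
    Module.finrank K (p.map f) + Module.finrank K (p ⊓ LinearMap.ker f : Submodule K V) =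
      Module.finrank K p := by
  rw [← (f.domRestrict p).finrank_range_add_finrank_ker, LinearMap.range_domRestrict,
    LinearMap.ker_domRestrict, ← Submodule.finrank_map_subtype_eq, Submodule.map_comap_subtype]

theorem finrank_dihedralFun_add [CharZero K] (hd : d ≠ 0) :
    Module.finrank K (dihedralFun K d) +
      2 * Module.finrank K ((signSwapInvariants K d).map cyclicSum) =
      Module.finrank K (signSwapInvariants K d) := by
  have hsup := Submodule.finrank_sup_add_finrank_inf_eq
    (signSwapInvariants K d ⊓ LinearMap.ker cyclicSum)
    (signSwapInvariants K d ⊓ LinearMap.ker (cyclicSum ∘ₗ rotate))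
  have hcyc := finrank_map_add_finrank_inf_ker cyclicSum (signSwapInvariants K d)
  have hrot := finrank_map_add_finrank_inf_ker (cyclicSum ∘ₗ rotate) (signSwapInvariants K d)
  rw [Submodule.map_comp, map_rotate_signSwapInvariants] at hrot
  rw [sup_ker_cyclicSum_eq hd] at hsup
  rw [dihedralFun]
  omega

theorem dihedralFun_eq_bot_of_odd [CharZero K] (hd : Odd d) : dihedralFun K d = ⊥ := by
  rw [dihedralFun, signSwapInvariants_eq_bot_of_odd hd, bot_inf_eq, bot_inf_eq]

end SignSwapInvariants

section ExponentCounting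

variable {K : Type*} [Field K]

/-- The triples of sum `e` up to the swap of the first two entries; doubling them gives the
exponents that parametrize `signSwapInvariants K (2 * e)`. -/
def pairTriples (e : ℕ) : Finset (ℕ × ℕ × ℕ) := {m ∈ triples e | m.1 ≤ m.2.1}

/-- The triples of sum `e` up to permutations; doubling them gives the exponents that parametrize
the cyclic sums of the elements of `signSwapInvariants K (2 * e)`. -/
def sortedTriples (e : ℕ) : Finset (ℕ × ℕ × ℕ) := {m ∈ triples e | m.1 ≤ m.2.1 ∧ m.2.1 ≤ m.2.2}

theorem mem_pairTriples {e : ℕ} {m : ℕ × ℕ × ℕ} :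
    m ∈ pairTriples e ↔ m.1 + m.2.1 + m.2.2 = e ∧ m.1 ≤ m.2.1 := by
  rw [pairTriples, mem_filter, mem_triples]

theorem mem_sortedTriples {e : ℕ} {m : ℕ × ℕ × ℕ} :
    m ∈ sortedTriples e ↔ m.1 + m.2.1 + m.2.2 = e ∧ m.1 ≤ m.2.1 ∧ m.2.1 ≤ m.2.2 := by
  rw [sortedTriples, mem_filter, mem_triples]

theorem two_smul_mem_triples {e : ℕ} {m : ℕ × ℕ × ℕ} (hm : m.1 + m.2.1 + m.2.2 = e) :
    2 • m ∈ triples (2 * e) := by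
  simp only [mem_triples, Prod.smul_fst, Prod.smul_snd, smul_eq_mul, ← hm]
  ring

theorem signSwapSum_monomialFun_eq_zero [CharZero K] {m : ℕ × ℕ × ℕ}
    (h : Odd m.1 ∨ Odd m.2.1 ∨ Odd m.2.2) :
    signSwapSum (monomialFun m : K → K → K → K) = 0 := by
  have hneg : signSwapSum (-monomialFun m) = signSwapSum (monomialFun m : K → K → K → K) := by
    rcases h with h | h | h
    · rw [← signSwapSum_neg_left (monomialFun m)]
      congr 1
      ext a b c
      simp [monomialFun, h.neg_pow]
    · rw [← signSwapSum_neg_middle (monomialFun m)]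
      congr 1
      ext a b c
      simp [monomialFun, h.neg_pow]
    · rw [← signSwapSum_neg_right (monomialFun m)]
      congr 1
      ext a b c
      simp [monomialFun, h.neg_pow]
  rw [map_neg] at hneg
  ext a b c
  exact neg_eq_self.1 (congrFun₃ hneg a b c)

theorem signSwapSum_monomialFun_swap (i j k : ℕ) :
    signSwapSum (monomialFun (j, i, k) : K → K → K → K) = signSwapSum (monomialFun (i, j, k)) := by
  rw [← signSwapSum_swap]
  congr 1
  ext a b c
  simp only [monomialFun]
  ring

theorem signSwapSum_mem_span [CharZero K] {m : ℕ × ℕ × ℕ} {e : ℕ} (hm : m ∈ triples (2 * e)) :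
    signSwapSum (monomialFun m : K → K → K → K) ∈
      Submodule.span K ((fun m ↦ signSwapSum (monomialFun (2 • m))) '' pairTriples e) := by
  by_cases h : Odd m.1 ∨ Odd m.2.1 ∨ Odd m.2.2
  · rw [signSwapSum_monomialFun_eq_zero h]
    exact zero_mem _
  obtain ⟨i, j, k⟩ := m
  simp only [not_or, Nat.not_odd_iff_even, even_iff_exists_two_mul] at h
  obtain ⟨⟨i, rfl⟩, ⟨j, rfl⟩, ⟨k, rfl⟩⟩ := h
  have hsum : i + j + k = e := by
    have h : 2 * i + 2 * j + 2 * k = 2 * e := mem_triples.1 hm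
    omega
  refine Submodule.subset_span ?_
  rcases le_total i j with hij | hji
  · exact ⟨(i, j, k), mem_pairTriples.2 ⟨hsum, hij⟩, rfl⟩
  · exact ⟨(j, i, k), mem_pairTriples.2 ⟨by simpa only [add_comm j i], hji⟩,
      signSwapSum_monomialFun_swap _ _ _⟩

theorem signSwapInvariants_le_span [CharZero K] (e : ℕ) : signSwapInvariants K (2 * e) ≤
    Submodule.span K ((fun m ↦ signSwapSum (monomialFun (2 • m))) '' pairTriples e) := by
  intro F hF
  have hmap : (homogeneousFun K (2 * e)).map signSwapSum ≤
      Submodule.span K ((fun m ↦ signSwapSum (monomialFun (2 • m))) '' pairTriples e) := by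
    rw [homogeneousFun_eq_span, Submodule.map_span, Submodule.span_le]
    rintro _ ⟨_, ⟨m, hm, rfl⟩, rfl⟩
    exact signSwapSum_mem_span hm
  rw [← inv_smul_smul₀ (by norm_num : (16 : K) ≠ 0) F, ← signSwapSum_of_mem_signSwapInvariants hF]
  exact Submodule.smul_mem _ _ (hmap ⟨F, hF.1, rfl⟩)

theorem finrank_signSwapInvariants_le [CharZero K] (e : ℕ) :
    Module.finrank K (signSwapInvariants K (2 * e)) ≤ (pairTriples e).card := by
  classical
  have := Module.Finite.span_of_finite K ((pairTriples e).finite_toSet.image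
    fun m ↦ signSwapSum (monomialFun (2 • m) : K → K → K → K))
  refine (Submodule.finrank_mono (signSwapInvariants_le_span e)).trans ?_
  rw [← coe_image]
  exact (finrank_span_finset_le_card _).trans card_image_le

theorem exists_dual_monomialFun [Infinite K] (m : ℕ × ℕ × ℕ) :
    ∃ δ : Module.Dual K (K → K → K → K), ∀ n, δ (monomialFun n) = if n = m then 1 else 0 := by
  classical
  obtain ⟨g, hg⟩ := (evalFun (R := K)).exists_leftInverse_of_injective
    (LinearMap.ker_eq_bot.2 evalFun_injective)
  refine ⟨MvPolynomial.lcoeff K (exponent m) ∘ₗ g, fun n ↦ ?_⟩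
  have hgn : g (monomialFun n) = MvPolynomial.monomial (exponent n) 1 := by
    rw [← one_smul K (monomialFun n), ← evalFun_monomial]
    exact LinearMap.congr_fun hg _
  rw [LinearMap.comp_apply, hgn, MvPolynomial.lcoeff_apply, MvPolynomial.coeff_monomial]
  simp only [exponent_injective.eq_iff]

theorem cyclicSum_signSwapSum_monomialFun (i j k : ℕ) :
    cyclicSum (signSwapSum (monomialFun (2 • (i, j, k)) : K → K → K → K)) =
      (8 : K) • (monomialFun (2 • (i, j, k)) + monomialFun (2 • (j, i, k)) +
        monomialFun (2 • (k, i, j)) + monomialFun (2 • (k, j, i)) +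
        monomialFun (2 • (j, k, i)) + monomialFun (2 • (i, k, j))) := by
  ext a b c
  simp only [cyclicSum_apply, signSwapSum_apply, signSum, monomialFun, Prod.smul_mk, smul_eq_mul,
    (even_two_mul _).neg_pow, Pi.smul_apply, Pi.add_apply]
  ring

theorem exists_dual_cyclicSum_monomialFun [CharZero K] {e : ℕ} {m : ℕ × ℕ × ℕ}
    (hm : m ∈ sortedTriples e) :
    ∃ δ : Module.Dual K (K → K → K → K),
      δ (cyclicSum (signSwapSum (monomialFun (2 • m)))) = 1 ∧
      ∀ n ∈ sortedTriples e, n ≠ m → δ (cyclicSum (signSwapSum (monomialFun (2 • n)))) = 0 := by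
  obtain ⟨δ, hδ⟩ := exists_dual_monomialFun (K := K) (2 • m)
  have hδ' (n : ℕ × ℕ × ℕ) : δ (monomialFun (2 • n)) = if n = m then 1 else 0 := by
    simp only [hδ, smul_right_inj (two_ne_zero' ℕ)]
  obtain ⟨i, j, k⟩ := m
  have hself : δ (cyclicSum (signSwapSum (monomialFun (2 • (i, j, k))))) ≠ 0 := by
    simp only [cyclicSum_signSwapSum_monomialFun, map_smul, map_add, hδ', if_pos]
    split_ifs <;> norm_num
  refine ⟨(δ (cyclicSum (signSwapSum (monomialFun (2 • (i, j, k))))))⁻¹ • δ,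
    inv_mul_cancel₀ hself, ?_⟩
  rintro ⟨i', j', k'⟩ hn hne
  have hm' := mem_sortedTriples.1 hm
  have hn' := mem_sortedTriples.1 hn
  simp only [ne_eq, Prod.mk.injEq] at hm' hn' hne
  suffices δ (cyclicSum (signSwapSum (monomialFun (2 • (i', j', k'))))) = 0 by
    rw [LinearMap.smul_apply, this, smul_zero]
  simp only [cyclicSum_signSwapSum_monomialFun, map_smul, map_add, hδ', Prod.mk.injEq]
  rw [if_neg, if_neg, if_neg, if_neg, if_neg, if_neg]
  · simp
  all_goals omega

theorem card_sortedTriples_le_finrank_map [CharZero K] (e : ℕ) : (sortedTriples e).card ≤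
    Module.finrank K ((signSwapInvariants K (2 * e)).map cyclicSum) := by
  let v (m : sortedTriples e) : K → K → K → K := cyclicSum (signSwapSum (monomialFun (2 • m.1)))
  choose δ hself hne using fun m : sortedTriples e ↦ exists_dual_cyclicSum_monomialFun (K := K) m.2
  have hv : LinearIndependent K v := .of_pairwise_dual_eq_zero_one v δ
    (fun m n hmn ↦ hne m n n.2 (Subtype.coe_injective.ne hmn.symm)) hself
  have hspan : Submodule.span K (Set.range v) ≤ (signSwapInvariants K (2 * e)).map cyclicSum := by
    rw [Submodule.span_le]
    rintro _ ⟨m, rfl⟩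
    exact ⟨_, signSwapSum_mem_signSwapInvariants (monomialFun_mem_homogeneousFun
      (two_smul_mem_triples (mem_sortedTriples.1 m.2).1)), rfl⟩
  have h := Submodule.finrank_mono hspan
  rwa [finrank_span_eq_card hv, Fintype.card_coe] at h

theorem card_pairTriples_add_two_le (e : ℕ) :
    (pairTriples (e + 2)).card ≤ (pairTriples e).card + (e + 3) := by
  have hsub : pairTriples (e + 2) ⊆
      (pairTriples e).image (fun m ↦ (m.1 + 1, m.2.1 + 1, m.2.2)) ∪
        (range (e + 3)).image fun j ↦ (0, j, e + 2 - j) := by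
    rintro ⟨i, j, k⟩ hm
    obtain ⟨hs, hij⟩ := mem_pairTriples.1 hm
    simp only at hs hij
    rw [mem_union, mem_image, mem_image]
    rcases i with _ | i
    · exact .inr ⟨j, mem_range.2 (by omega), by simp; omega⟩
    · obtain ⟨j, rfl⟩ : ∃ j', j = j' + 1 := ⟨j - 1, by omega⟩
      exact .inl ⟨(i, j, k), mem_pairTriples.2 ⟨by simp only; omega, by simp only; omega⟩, rfl⟩
  refine (card_le_card hsub).trans ((card_union_le _ _).trans ?_)
  exact add_le_add card_image_le (card_image_le.trans (card_range _).le)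

theorem card_sortedTriples_add_le (e : ℕ) :
    (sortedTriples e).card + ((e + 3) / 2 + 1) ≤ (sortedTriples (e + 3)).card := by
  let shift (m : ℕ × ℕ × ℕ) : ℕ × ℕ × ℕ := (m.1 + 1, m.2.1 + 1, m.2.2 + 1)
  let edge (j : ℕ) : ℕ × ℕ × ℕ := (0, j, e + 3 - j)
  have hshift : Function.Injective shift := by
    rintro ⟨i, j, k⟩ ⟨i', j', k'⟩ hm
    simpa [shift] using hm
  have hedge : Function.Injective edge := fun i j hij ↦ (Prod.mk.inj (Prod.mk.inj hij).2).1
  have hdisj : Disjoint ((sortedTriples e).image shift) ((range ((e + 3) / 2 + 1)).image edge) := by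
    rw [disjoint_left]
    intro m hm hm'
    obtain ⟨n, -, rfl⟩ := mem_image.1 hm
    obtain ⟨j, -, hj⟩ := mem_image.1 hm'
    exact Nat.succ_ne_zero _ (congrArg Prod.fst hj).symm
  rw [← card_image_of_injective _ hshift, ← card_range ((e + 3) / 2 + 1),
    ← card_image_of_injective _ hedge, ← card_union_of_disjoint hdisj]
  refine card_le_card (union_subset ?_ ?_) <;> intro m hm <;>
    obtain ⟨n, hn, rfl⟩ := mem_image.1 hm
  · rw [mem_sortedTriples] at hn ⊢
    simp only [shift]
    omega
  · rw [mem_range] at hn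
    simp only [mem_sortedTriples, edge]
    omega

theorem card_pairTriples_le {e : ℕ} (he : e ≠ 0) :
    (pairTriples e).card ≤ 2 * (sortedTriples e).card + ((2 * e) ^ 2 - 1) / 48 := by
  induction e using Nat.strong_induction_on with
  | _ e ih =>
    rcases lt_or_ge e 7 with hlt | hge
    · interval_cases e <;> first | contradiction | decide
    · obtain ⟨e, rfl⟩ := Nat.exists_eq_add_of_le' hge
      have hih := ih (e + 1) (by omega) (by omega)
      have hpair₁ := card_pairTriples_add_two_le (e + 1)
      have hpair₂ := card_pairTriples_add_two_le (e + 3)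
      have hpair₃ := card_pairTriples_add_two_le (e + 5)
      have hsorted₁ := card_sortedTriples_add_le (e + 1)
      have hsorted₂ := card_sortedTriples_add_le (e + 4)
      have hquot : ((2 * (e + 7)) ^ 2 - 1) / 48 = ((2 * (e + 1)) ^ 2 - 1) / 48 + (e + 4) := by
        rw [← Nat.add_mul_div_right _ _ (by norm_num)]
        congr 1
        zify [Nat.one_le_pow 2 (2 * (e + 1)) (by omega), Nat.one_le_pow 2 (2 * (e + 7)) (by omega)]
        ring
      rw [hquot]
      simp only [add_assoc, Nat.reduceAdd] at *
      omega

theorem finrank_dihedralFun_le [CharZero K] {e : ℕ} (he : e ≠ 0) :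
    Module.finrank K (dihedralFun K (2 * e)) ≤ ((2 * e) ^ 2 - 1) / 48 := by
  have hdim := finrank_dihedralFun_add (K := K) (mul_ne_zero two_ne_zero he)
  have hupper := finrank_signSwapInvariants_le (K := K) e
  have hlower := card_sortedTriples_le_finrank_map (K := K) e
  have hcard := card_pairTriples_le he
  omega

end ExponentCounting

section MultipleSums

theorem summable_prod_pi {f : ℕ → ℝ} (hf : Summable f) (hf₀ : 0 ≤ f) (p : ℕ) :
    Summable fun k : Fin p → ℕ ↦ ∏ i, f (k i) := by
  induction p with
  | zero => exact (hasSum_fintype _).summable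
  | succ p ih =>
    rw [← (Fin.consEquiv fun _ ↦ ℕ).summable_iff]
    simpa [Function.comp_def, Fin.prod_univ_succ] using
      hf.mul_of_nonneg ih hf₀ fun k ↦ prod_nonneg fun i _ ↦ hf₀ (k i)

/-- The summand `k_1 ^ (-n_1) ⋯ k_p ^ (-n_p)` of a multiple zeta value, extended by zero to all
`k : Fin p → ℕ`. -/
noncomputable def mzvTerm {p : ℕ} (n : Fin p → ℕ) : (Fin p → ℕ) → ℝ :=
  {k | StrictMono k ∧ ∀ i, 0 < k i}.indicator fun k ↦ ∏ i, ((k i : ℝ) ^ n i)⁻¹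

theorem mzvTerm_nonneg {p : ℕ} (n k : Fin p → ℕ) : 0 ≤ mzvTerm n k :=
  Set.indicator_nonneg (fun _ _ ↦ by positivity) k

-- The spare factor `k_p` of the summand is split evenly among the `p` variables.
theorem MZIndex.Admissible.prod_rpow_le {z : MZIndex} (hz : z.Admissible) {k : Fin (z.1 + 1) → ℕ}
    (hk : StrictMono k) (hk₀ : ∀ i, 0 < k i) :
    ∏ i, (k i : ℝ) ^ (1 + ((z.1 : ℝ) + 1)⁻¹) ≤ ∏ i, (k i : ℝ) ^ z.2 i := by
  have hone (i) : (1 : ℝ) ≤ k i := mod_cast hk₀ i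
  have hlast : ∏ i, (k i : ℝ) ^ ((z.1 : ℝ) + 1)⁻¹ ≤ k (Fin.last z.1) := by
    calc ∏ i, (k i : ℝ) ^ ((z.1 : ℝ) + 1)⁻¹
        ≤ ∏ _i : Fin (z.1 + 1), (k (Fin.last z.1) : ℝ) ^ ((z.1 : ℝ) + 1)⁻¹ := by
          gcongr with i
          exact hk.monotone (Fin.le_last i)
      _ = k (Fin.last z.1) := by
          rw [prod_const, card_univ, Fintype.card_fin]
          exact_mod_cast Real.rpow_inv_natCast_pow (Nat.cast_nonneg _) z.1.succ_ne_zero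
  calc ∏ i, (k i : ℝ) ^ (1 + ((z.1 : ℝ) + 1)⁻¹)
      = (∏ i, (k i : ℝ)) * ∏ i, (k i : ℝ) ^ ((z.1 : ℝ) + 1)⁻¹ := by
        rw [← prod_mul_distrib]
        exact prod_congr rfl fun i _ ↦ Real.rpow_one_add' (by positivity) (by positivity)
    _ ≤ (∏ i, (k i : ℝ)) * k (Fin.last z.1) := by gcongr
    _ = (∏ i : Fin z.1, (k i.castSucc : ℝ) ^ 1) * (k (Fin.last z.1) : ℝ) ^ 2 := by
        simp only [Fin.prod_univ_castSucc, pow_one]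
        ring
    _ ≤ (∏ i : Fin z.1, (k i.castSucc : ℝ) ^ z.2 i.castSucc) *
          (k (Fin.last z.1) : ℝ) ^ z.2 (Fin.last z.1) := by
        gcongr with i
        exacts [hone _, hz.1 _, hone _, hz.2]
    _ = ∏ i, (k i : ℝ) ^ z.2 i := (Fin.prod_univ_castSucc fun i ↦ (k i : ℝ) ^ z.2 i).symm

theorem MZIndex.Admissible.summable_mzvTerm {z : MZIndex} (hz : z.Admissible) :
    Summable (mzvTerm z.2) := by
  have hpow : Summable fun n : ℕ ↦ ((n : ℝ) ^ (1 + ((z.1 : ℝ) + 1)⁻¹))⁻¹ :=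
    Real.summable_nat_rpow_inv.2 (lt_add_of_pos_right 1 (by positivity))
  refine .of_nonneg_of_le (mzvTerm_nonneg z.2) (fun k ↦ ?_)
    (summable_prod_pi hpow (fun n ↦ by positivity) (z.1 + 1))
  refine Set.indicator_apply_le' (fun hk ↦ ?_) fun _ ↦ by positivity
  rw [prod_inv_distrib, prod_inv_distrib]
  exact inv_anti₀ (prod_pos fun i _ ↦ Real.rpow_pos_of_pos (mod_cast hk.2 i) _)
    (hz.prod_rpow_le hk.1 hk.2)

theorem MZIndex.Admissible.hasSum_mzvTerm {z : MZIndex} (hz : z.Admissible) :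
    HasSum (mzvTerm z.2) (mzv (z.1 + 1) z.2) := by
  have h := hz.summable_mzvTerm.hasSum
  rwa [mzvTerm, ← _root_.tsum_subtype] at h

theorem mzvTerm_one (a n : ℕ) : mzvTerm ![a] ![n] = if 0 < n then ((n : ℝ) ^ a)⁻¹ else 0 := by
  simp [mzvTerm, Set.indicator_apply, Subsingleton.strictMono]

theorem mzvTerm_two (a b p q : ℕ) : mzvTerm ![a, b] ![p, q] =
    if 0 < p ∧ p < q then ((p : ℝ) ^ a)⁻¹ * ((q : ℝ) ^ b)⁻¹ else 0 := by
  rw [mzvTerm, Set.indicator_apply, Fin.prod_univ_two]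
  exact if_congr (by simpa [Fin.strictMono_iff_lt_succ, Fin.forall_fin_succ] using by omega) rfl rfl

theorem mzvTerm_three (a b c n p q : ℕ) : mzvTerm ![a, b, c] ![n, p, q] =
    if 0 < n ∧ n < p ∧ p < q then ((n : ℝ) ^ a)⁻¹ * ((p : ℝ) ^ b)⁻¹ * ((q : ℝ) ^ c)⁻¹ else 0 := by
  rw [mzvTerm, Set.indicator_apply, Fin.prod_univ_three]
  exact if_congr (by simpa [Fin.strictMono_iff_lt_succ, Fin.forall_fin_succ] using by omega) rfl rfl

theorem hasSum_mzv_one {a : ℕ} (ha : 2 ≤ a) : HasSum (fun n ↦ mzvTerm ![a] ![n]) (mzv 1 ![a]) := by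
  have hadm : MZIndex.Admissible ⟨0, ![a]⟩ := ⟨fun _ ↦ by simpa using by omega, ha⟩
  convert (Equiv.funUnique (Fin 1) ℕ).symm.hasSum_iff.2 hadm.hasSum_mzvTerm using 1
  ext n
  rw [Matrix.vec_single_eq_const n]
  rfl

theorem hasSum_mzv_two {a b : ℕ} (ha : 1 ≤ a) (hb : 2 ≤ b) :
    HasSum (fun x : ℕ × ℕ ↦ mzvTerm ![a, b] ![x.1, x.2]) (mzv 2 ![a, b]) :=
  (finTwoArrowEquiv ℕ).symm.hasSum_iff.2 <|
    MZIndex.Admissible.hasSum_mzvTerm (z := ⟨1, ![a, b]⟩)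
      ⟨by simpa [Fin.forall_fin_succ] using by omega, hb⟩

/-- A triple of natural numbers as a vector. -/
def finThreeArrowEquiv : (Fin 3 → ℕ) ≃ ℕ × ℕ × ℕ where
  toFun k := (k 0, k 1, k 2)
  invFun x := ![x.1, x.2.1, x.2.2]
  left_inv k := by ext i; fin_cases i <;> rfl
  right_inv _ := rfl

theorem hasSum_mzv_three {a b c : ℕ} (ha : 1 ≤ a) (hb : 1 ≤ b) (hc : 2 ≤ c) :
    HasSum (fun x : ℕ × ℕ × ℕ ↦ mzvTerm ![a, b, c] ![x.1, x.2.1, x.2.2]) (mzv 3 ![a, b, c]) :=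
  finThreeArrowEquiv.symm.hasSum_iff.2 <|
    MZIndex.Admissible.hasSum_mzvTerm (z := ⟨2, ![a, b, c]⟩)
      ⟨by simpa [Fin.forall_fin_succ] using by omega, hc⟩

theorem hasSum_ite_fst_eq {α β : Type*} [DecidableEq α] {f : β → ℝ} {s : ℝ} (hf : HasSum f s)
    (g : β → α) : HasSum (fun x : α × β ↦ if x.1 = g x.2 then f x.2 else 0) s := by
  rw [← Function.Injective.hasSum_iff (g := fun y ↦ (g y, y)) fun _ _ h ↦ (Prod.mk.inj h).2]
  · simpa [Function.comp_def] using hf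
  · exact fun x hx ↦ if_neg fun h ↦ hx ⟨x.2, Prod.ext h.symm rfl⟩

theorem mzvTerm_mul_of_le {n q : ℕ} (hnq : n ≤ q) (a b c p : ℕ) :
    mzvTerm ![a] ![n] * mzvTerm ![b, c] ![p, q] =
      mzvTerm ![a, b, c] ![n, p, q] + mzvTerm ![b, a, c] ![p, n, q] +
        (if n = p then mzvTerm ![a + b, c] ![p, q] else 0) +
        if n = q then mzvTerm ![b, a + c] ![p, q] else 0 := by
  simp only [mzvTerm_one, mzvTerm_two, mzvTerm_three, pow_add, mul_inv]
  grind (splits := 20)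

theorem mzvTerm_mul_of_lt {n q : ℕ} (hqn : q < n) (a b c p : ℕ) :
    mzvTerm ![a] ![n] * mzvTerm ![b, c] ![p, q] = mzvTerm ![b, c, a] ![p, q, n] := by
  simp only [mzvTerm_one, mzvTerm_two, mzvTerm_three]
  grind

theorem mzvTerm_three_eq_zero_of_le {p q : ℕ} (hqp : q ≤ p) (a b c n : ℕ) :
    mzvTerm ![a, b, c] ![n, p, q] = 0 := by
  rw [mzvTerm_three, if_neg (by omega)]

/-- The permutation of triples moving the first entry to the second place. -/
def swapFirst : (ℕ × ℕ × ℕ) ≃ (ℕ × ℕ × ℕ) where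
  toFun x := (x.2.1, x.1, x.2.2)
  invFun x := (x.2.1, x.1, x.2.2)
  left_inv _ := rfl
  right_inv _ := rfl

/-- The permutation of triples moving the first entry to the last place. -/
def moveFirst : (ℕ × ℕ × ℕ) ≃ (ℕ × ℕ × ℕ) where
  toFun x := (x.2.1, x.2.2, x.1)
  invFun x := (x.2.2, x.1, x.2.1)
  left_inv _ := rfl
  right_inv _ := rfl

theorem hasSum_mzvTerm_mul_of_le {a b c : ℕ} (ha : 1 ≤ a) (hb : 1 ≤ b) (hc : 2 ≤ c) :
    HasSum (fun x : ℕ × ℕ × ℕ ↦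
        if x.1 ≤ x.2.2 then mzvTerm ![a] ![x.1] * mzvTerm ![b, c] ![x.2.1, x.2.2] else 0)
      (mzv 3 ![a, b, c] + mzv 3 ![b, a, c] + mzv 2 ![a + b, c] + mzv 2 ![b, a + c]) := by
  have hfst := hasSum_ite_fst_eq (hasSum_mzv_two (by omega : 1 ≤ a + b) hc) Prod.fst
  have hsnd := hasSum_ite_fst_eq (hasSum_mzv_two hb (by omega : 2 ≤ a + c)) Prod.snd
  convert (((hasSum_mzv_three ha hb hc).add
    (swapFirst.hasSum_iff.2 (hasSum_mzv_three hb ha hc))).add hfst).add hsnd using 1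
  ext ⟨n, p, q⟩
  by_cases hnq : n ≤ q
  · rw [if_pos hnq]
    exact mzvTerm_mul_of_le hnq a b c p
  · simp only [swapFirst, Function.comp_apply, Equiv.coe_fn_mk, mzvTerm_two, mzvTerm_three, hnq,
      if_false]
    rw [if_neg (by omega), if_neg (by omega), ← ite_and, if_neg (by omega),
      if_neg (by omega : n ≠ q)]
    simp only [add_zero]

theorem hasSum_mzvTerm_mul {a b c : ℕ} (ha : 2 ≤ a) (hb : 1 ≤ b) (hc : 2 ≤ c) :
    HasSum (fun x : ℕ × ℕ × ℕ ↦ mzvTerm ![a] ![x.1] * mzvTerm ![b, c] ![x.2.1, x.2.2])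
      (mzv 1 ![a] * mzv 2 ![b, c]) := by
  have hone := hasSum_mzv_one ha
  have htwo := hasSum_mzv_two hb hc
  have hmul := hone.mul htwo <| hone.summable.mul_of_nonneg htwo.summable
    (fun n ↦ mzvTerm_nonneg ![a] ![n]) fun x ↦ mzvTerm_nonneg ![b, c] ![x.1, x.2]
  exact hmul

theorem mzv_stuffle {a b c : ℕ} (ha : 2 ≤ a) (hb : 1 ≤ b) (hc : 2 ≤ c) :
    mzv 1 ![a] * mzv 2 ![b, c] = mzv 3 ![a, b, c] + mzv 3 ![b, a, c] + mzv 2 ![a + b, c] +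
      mzv 2 ![b, a + c] + mzv 3 ![b, c, a] := by
  refine (hasSum_mzvTerm_mul ha hb hc).unique ?_
  convert (hasSum_mzvTerm_mul_of_le (by omega : 1 ≤ a) hb hc).add
    (moveFirst.hasSum_iff.2 (hasSum_mzv_three hb (by omega : 1 ≤ c) ha)) using 1
  ext ⟨n, p, q⟩
  simp only [moveFirst, Function.comp_apply, Equiv.coe_fn_mk]
  split_ifs with hnq
  · rw [mzvTerm_three_eq_zero_of_le hnq, add_zero]
  · rw [mzvTerm_mul_of_lt (not_le.1 hnq), zero_add]

end MultipleSums

section PartialFractions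

variable {R : Type*} [CommRing R]

/-- The part of the partial fraction expansion of `u ^ (a + 1) * v ^ (b + 1)` that involves `u`,
where `u * v = s * (u + v)`; for example `u = 1 / m`, `v = 1 / k` and `s = 1 / (m + k)`. -/
def partialFractionSum (u s : R) (a b : ℕ) : R :=
  ∑ p ∈ antidiagonal (a + b), p.2.choose b * (u ^ (p.1 + 1) * s ^ (p.2 + 1))

theorem partialFractionSum_zero_left (u s : R) (b : ℕ) :
    partialFractionSum u s 0 b = u * s ^ (b + 1) := by
  rw [partialFractionSum, zero_add, sum_eq_single (0, b)]
  · simp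
  · intro p hp hne
    have hlt : p.2 < b := by
      rw [HasAntidiagonal.mem_antidiagonal] at hp
      rw [ne_eq, Prod.ext_iff] at hne
      omega
    rw [Nat.choose_eq_zero_of_lt hlt, Nat.cast_zero, zero_mul]
  · exact fun h ↦ absurd (HasAntidiagonal.mem_antidiagonal.2 (zero_add b)) h

theorem partialFractionSum_succ_zero (u s : R) (a : ℕ) :
    partialFractionSum u s (a + 1) 0 = s * partialFractionSum u s a 0 + u ^ (a + 2) * s := by
  simp only [partialFractionSum, add_zero, Nat.choose_zero_right, Nat.cast_one, one_mul]
  rw [Nat.sum_antidiagonal_succ', mul_sum, add_comm]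
  congr 1
  · exact sum_congr rfl fun p _ ↦ by ring
  · ring

theorem partialFractionSum_succ_succ (u s : R) (a b : ℕ) :
    partialFractionSum u s (a + 1) (b + 1) =
      s * (partialFractionSum u s a (b + 1) + partialFractionSum u s (a + 1) b) := by
  have hleft : a + 1 + (b + 1) = a + (b + 1) + 1 := by ring
  have hright : a + 1 + b = a + (b + 1) := by ring
  simp only [partialFractionSum]
  rw [hleft, hright, Nat.sum_antidiagonal_succ', ← sum_add_distrib, mul_sum]
  simp only [Nat.choose_zero_succ, Nat.cast_zero, zero_mul, zero_add]
  refine sum_congr rfl fun p _ ↦ ?_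
  rw [Nat.choose_succ_succ]
  push_cast
  ring

theorem mul_pow_eq_partialFractionSum_zero {u v s : R} (h : u * v = s * (u + v)) (b : ℕ) :
    u * v ^ (b + 1) = u * s ^ (b + 1) + partialFractionSum v s b 0 := by
  induction b with
  | zero =>
    rw [partialFractionSum_zero_left]
    linear_combination h
  | succ b ih =>
    rw [partialFractionSum_succ_zero]
    linear_combination s * ih + v ^ (b + 1) * h

theorem pow_mul_pow_eq_partialFractionSum {u v s : R} (h : u * v = s * (u + v)) (a b : ℕ) :
    u ^ (a + 1) * v ^ (b + 1) = partialFractionSum u s a b + partialFractionSum v s b a := by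
  induction a generalizing b with
  | zero =>
    rw [partialFractionSum_zero_left, zero_add, pow_one]
    exact mul_pow_eq_partialFractionSum_zero h b
  | succ a iha =>
    induction b with
    | zero =>
      rw [partialFractionSum_zero_left, zero_add, pow_one]
      have hvu : v * u = s * (v + u) := by linear_combination h
      linear_combination mul_pow_eq_partialFractionSum_zero hvu (a + 1)
    | succ b ihb =>
      rw [partialFractionSum_succ_succ, partialFractionSum_succ_succ]
      linear_combination s * ihb + s * iha (b + 1) + u ^ (a + 1) * v ^ (b + 1) * h

end PartialFractions

section ShuffleProduct

variable {A : Type*} [AddCommMonoid A]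

/-- The coefficients of the shuffle product of a zeta value with a double zeta value: if `s`, `t`
and `u` are the triple zeta values indexed by their exponents minus one, then
`shuffleSum s t u a b c` is the expansion of `ζ(a + 1) ζ(b + 1, c + 1)`. The families are separated
according to the position of the first variable, so that the same formula holds for summands. -/
def shuffleSum (s t u : ℕ → ℕ → ℕ → A) (a b c : ℕ) : A :=
  ∑ p ∈ antidiagonal (a + c), p.2.choose c •
      (∑ q ∈ antidiagonal (p.1 + b), q.2.choose b • s q.1 q.2 p.2 +
        ∑ q ∈ antidiagonal (b + p.1), q.2.choose p.1 • t q.1 q.2 p.2) +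
    ∑ p ∈ antidiagonal (c + a), p.2.choose a • u b p.1 p.2

theorem map_shuffleSum {B : Type*} [AddCommMonoid B] (φ : A →+ B) (s t u : ℕ → ℕ → ℕ → A)
    (a b c : ℕ) : φ (shuffleSum s t u a b c) =
      shuffleSum (fun i j k ↦ φ (s i j k)) (fun i j k ↦ φ (t i j k))
        (fun i j k ↦ φ (u i j k)) a b c := by
  simp only [shuffleSum, map_add, map_sum, map_nsmul]

theorem hasSum_shuffleSum [TopologicalSpace A] [ContinuousAdd A] {ι : Type*}
    {s t u : ℕ → ℕ → ℕ → ι → A} {s' t' u' : ℕ → ℕ → ℕ → A}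
    (hs : ∀ i j k, HasSum (s i j k) (s' i j k)) (ht : ∀ i j k, HasSum (t i j k) (t' i j k))
    (hu : ∀ i j k, HasSum (u i j k) (u' i j k)) (a b c : ℕ) :
    HasSum (fun x ↦ shuffleSum (fun i j k ↦ s i j k x) (fun i j k ↦ t i j k x)
      (fun i j k ↦ u i j k x) a b c) (shuffleSum s' t' u' a b c) :=
  (hasSum_sum fun _ _ ↦ ((hasSum_sum fun _ _ ↦ (hs _ _ _).const_smul _).add
    (hasSum_sum fun _ _ ↦ (ht _ _ _).const_smul _)).const_smul _).add
      (hasSum_sum fun _ _ ↦ (hu _ _ _).const_smul _)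

/-- The summands, resp. values, of convergent triple zeta values: those with last exponent `1`,
that is, last index `0`, are replaced by zero. -/
def convergentPart (t : ℕ → ℕ → ℕ → A) (i j k : ℕ) : A :=
  if k = 0 then 0 else t i j k

theorem choose_smul_congr {c k : ℕ} (hc : c ≠ 0) {x y : A} (h : k ≠ 0 → x = y) :
    k.choose c • x = k.choose c • y := by
  rcases eq_or_ne k 0 with rfl | hk
  · rw [Nat.choose_eq_zero_of_lt (Nat.pos_of_ne_zero hc), zero_smul, zero_smul]
  · rw [h hk]

theorem sum_antidiagonal_choose_smul_convergentPart (u : ℕ → ℕ → ℕ → A) (a b c : ℕ) :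
    ∑ p ∈ antidiagonal (c + a), p.2.choose a • u b p.1 p.2 =
      ∑ p ∈ antidiagonal (c + a), p.2.choose a • convergentPart u b p.1 p.2 +
        if a = 0 then u b c 0 else 0 := by
  rcases eq_or_ne a 0 with rfl | ha
  · cases c with
    | zero => simp [convergentPart]
    | succ c => simp [Nat.sum_antidiagonal_succ', convergentPart, add_comm]
  · rw [if_neg ha, add_zero]
    exact sum_congr rfl fun p _ ↦ choose_smul_congr ha fun hp ↦ (if_neg hp).symm

theorem shuffleSum_convergentPart (s t u : ℕ → ℕ → ℕ → A) (a b : ℕ) {c : ℕ} (hc : c ≠ 0) :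
    shuffleSum s t u a b c =
      shuffleSum (convergentPart s) (convergentPart t) (convergentPart u) a b c +
        if a = 0 then u b c 0 else 0 := by
  rw [shuffleSum, sum_antidiagonal_choose_smul_convergentPart, ← add_assoc, shuffleSum]
  congr 2
  refine sum_congr rfl fun p _ ↦ choose_smul_congr hc fun hp ↦ ?_
  simp only [convergentPart, if_neg hp]

/-- The summand `m ^ -(i + 1) * (m + k) ^ -(j + 1) * (m + k + l) ^ -(r + 1)` of a triple zeta value,
as a function of the gaps `m`, `k`, `l` of the summation variables. -/
def gapTerm {K : Type*} [Field K] (m k l : K) (i j r : ℕ) : K :=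
  m⁻¹ ^ (i + 1) * (m + k)⁻¹ ^ (j + 1) * (m + k + l)⁻¹ ^ (r + 1)

theorem shuffleSum_gapTerm {K : Type*} [Field K] [LinearOrder K] [IsStrictOrderedRing K] {m k l : K}
    (hm : 0 < m) (hk : 0 < k) (hl : 0 < l) (a b c : ℕ) :
    shuffleSum (gapTerm m k l) (gapTerm k m l) (gapTerm k l m) a b c =
      m⁻¹ ^ (a + 1) * (k⁻¹ ^ (b + 1) * (k + l)⁻¹ ^ (c + 1)) := by
  have houter := pow_mul_pow_eq_partialFractionSum (u := m⁻¹) (v := (k + l)⁻¹) (s := (m + k + l)⁻¹)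
    (by field_simp; ring) a c
  have hinner := pow_mul_pow_eq_partialFractionSum (u := m⁻¹) (v := k⁻¹) (s := (m + k)⁻¹)
    (by field_simp; ring)
  rw [mul_left_comm, houter, mul_add, shuffleSum]
  congr 1
  · rw [partialFractionSum, mul_sum]
    refine sum_congr rfl fun p _ ↦ ?_
    rw [show k⁻¹ ^ (b + 1) * (p.2.choose c * (m⁻¹ ^ (p.1 + 1) * (m + k + l)⁻¹ ^ (p.2 + 1))) =
      p.2.choose c * ((m⁻¹ ^ (p.1 + 1) * k⁻¹ ^ (b + 1)) * (m + k + l)⁻¹ ^ (p.2 + 1)) by ring,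
      hinner, nsmul_eq_mul, partialFractionSum, partialFractionSum, add_mul, sum_mul, sum_mul]
    simp only [gapTerm, nsmul_eq_mul, add_comm k m, mul_assoc]
  · rw [partialFractionSum, mul_sum]
    refine sum_congr rfl fun p _ ↦ ?_
    rw [gapTerm, nsmul_eq_mul, show k + l + m = m + k + l by ring]
    ring

end ShuffleProduct

section DoubleShuffle

theorem hasSum_gap_two_iff {f : ℕ → ℕ → ℝ} (hf : ∀ p q, ¬(0 < p ∧ p < q) → f p q = 0) {s : ℝ} :
    HasSum (fun x : ℕ × ℕ ↦ f (x.1 + 1) (x.1 + 1 + (x.2 + 1))) s ↔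
      HasSum (fun x : ℕ × ℕ ↦ f x.1 x.2) s := by
  refine Function.Injective.hasSum_iff (g := fun x : ℕ × ℕ ↦ (x.1 + 1, x.1 + 1 + (x.2 + 1)))
    (f := fun x ↦ f x.1 x.2) ?_ ?_
  · rintro ⟨m, k⟩ ⟨m', k'⟩ h
    simp only [Prod.mk.injEq] at h ⊢
    omega
  · rintro ⟨p, q⟩ hx
    refine hf p q fun h ↦ hx ⟨(p - 1, q - p - 1), Prod.ext ?_ ?_⟩ <;> simp only <;> omega

theorem hasSum_gap_three_iff {f : ℕ → ℕ → ℕ → ℝ}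
    (hf : ∀ n p q, ¬(0 < n ∧ n < p ∧ p < q) → f n p q = 0) {s : ℝ} :
    HasSum (fun x : ℕ × ℕ × ℕ ↦
        f (x.1 + 1) (x.1 + 1 + (x.2.1 + 1)) (x.1 + 1 + (x.2.1 + 1) + (x.2.2 + 1))) s ↔
      HasSum (fun x : ℕ × ℕ × ℕ ↦ f x.1 x.2.1 x.2.2) s := by
  refine Function.Injective.hasSum_iff (g := fun x : ℕ × ℕ × ℕ ↦
      (x.1 + 1, x.1 + 1 + (x.2.1 + 1), x.1 + 1 + (x.2.1 + 1) + (x.2.2 + 1)))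
    (f := fun x ↦ f x.1 x.2.1 x.2.2) ?_ ?_
  · rintro ⟨m, k, l⟩ ⟨m', k', l'⟩ h
    simp only [Prod.mk.injEq] at h ⊢
    omega
  · rintro ⟨n, p, q⟩ hx
    refine hf n p q fun h ↦ hx ⟨(n - 1, p - n - 1, q - p - 1), Prod.ext ?_ (Prod.ext ?_ ?_)⟩ <;>
      simp only <;> omega

theorem hasSum_mzv_one_gap {a : ℕ} (ha : a ≠ 0) :
    HasSum (fun m : ℕ ↦ ((m : ℝ) + 1)⁻¹ ^ (a + 1)) (mzv 1 ![a + 1]) := by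
  have h := (hasSum_nat_add_iff' (f := fun n ↦ mzvTerm ![a + 1] ![n]) 1).2
    (hasSum_mzv_one (by omega))
  simpa [mzvTerm_one] using h

theorem hasSum_mzv_two_gap (b : ℕ) {c : ℕ} (hc : c ≠ 0) :
    HasSum (fun x : ℕ × ℕ ↦ ((x.1 : ℝ) + 1)⁻¹ ^ (b + 1) *
      ((x.1 : ℝ) + 1 + (x.2 + 1))⁻¹ ^ (c + 1)) (mzv 2 ![b + 1, c + 1]) := by
  have h := (hasSum_gap_two_iff (f := fun p q ↦ mzvTerm ![b + 1, c + 1] ![p, q])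
    fun p q hpq ↦ by rw [mzvTerm_two, if_neg hpq]).2
    (hasSum_mzv_two (a := b + 1) (b := c + 1) (by omega) (by omega))
  simpa [mzvTerm_two] using h

theorem hasSum_mzv_three_gap (i j : ℕ) {r : ℕ} (hr : r ≠ 0) :
    HasSum (fun x : ℕ × ℕ × ℕ ↦ gapTerm ((x.1 : ℝ) + 1) (x.2.1 + 1) (x.2.2 + 1) i j r)
      (mzv 3 ![i + 1, j + 1, r + 1]) := by
  have h := (hasSum_gap_three_iff (f := fun n p q ↦ mzvTerm ![i + 1, j + 1, r + 1] ![n, p, q])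
    fun n p q hnpq ↦ by rw [mzvTerm_three, if_neg hnpq]).2
    (hasSum_mzv_three (a := i + 1) (b := j + 1) (c := r + 1) (by omega) (by omega) (by omega))
  simpa [mzvTerm_three, gapTerm] using h

/-- The triple zeta value `ζ(i + 1, j + 1, k + 1)`, replaced by zero when it diverges. -/
noncomputable def tripleZeta : ℕ → ℕ → ℕ → ℝ :=
  convergentPart fun i j k ↦ mzv 3 ![i + 1, j + 1, k + 1]

theorem hasSum_tripleZeta (i j r : ℕ) :
    HasSum (fun x : ℕ × ℕ × ℕ ↦
      convergentPart (gapTerm ((x.1 : ℝ) + 1) (x.2.1 + 1) (x.2.2 + 1)) i j r)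
      (tripleZeta i j r) := by
  simp only [tripleZeta, convergentPart]
  split_ifs with hr
  · exact hasSum_zero
  · exact hasSum_mzv_three_gap i j hr

theorem hasSum_shuffleSum_tripleZeta (a b : ℕ) {c : ℕ} (hc : c ≠ 0) :
    HasSum (fun x : ℕ × ℕ × ℕ ↦ ((x.1 : ℝ) + 1)⁻¹ ^ (a + 1) *
        (((x.2.1 : ℝ) + 1)⁻¹ ^ (b + 1) * ((x.2.1 : ℝ) + 1 + (x.2.2 + 1))⁻¹ ^ (c + 1)) -
        if a = 0 then gapTerm ((x.2.1 : ℝ) + 1) (x.2.2 + 1) (x.1 + 1) b c 0 else 0)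
      (shuffleSum tripleZeta tripleZeta tripleZeta a b c) := by
  convert hasSum_shuffleSum hasSum_tripleZeta
    (fun i j k ↦ swapFirst.hasSum_iff.2 (hasSum_tripleZeta i j k))
    (fun i j k ↦ moveFirst.hasSum_iff.2 (hasSum_tripleZeta i j k)) a b c using 1
  ext ⟨m, k, l⟩
  rw [← shuffleSum_gapTerm (by positivity) (by positivity) (by positivity) a b c,
    shuffleSum_convergentPart _ _ _ _ _ hc, add_sub_cancel_right]
  rfl

theorem mzv_shuffle {a c : ℕ} (ha : a ≠ 0) (b : ℕ) (hc : c ≠ 0) :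
    mzv 1 ![a + 1] * mzv 2 ![b + 1, c + 1] =
      shuffleSum tripleZeta tripleZeta tripleZeta a b c := by
  have hone := hasSum_mzv_one_gap ha
  have htwo := hasSum_mzv_two_gap b hc
  have hmul := hone.mul htwo <| hone.summable.mul_of_nonneg htwo.summable
    (fun m ↦ by dsimp; positivity) fun x ↦ by dsimp; positivity
  refine hmul.unique ?_
  simpa only [if_neg ha, sub_zero] using hasSum_shuffleSum_tripleZeta a b hc

theorem hasSum_sub_add_nat_of_antitone {f : ℕ → ℝ} (hf : Antitone f)
    (hlim : Filter.Tendsto f Filter.atTop (nhds 0)) (N : ℕ) :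
    HasSum (fun m ↦ f m - f (N + m)) (∑ i ∈ range N, f i) := by
  rw [hasSum_iff_tendsto_nat_of_nonneg fun m ↦ sub_nonneg.2 (hf (Nat.le_add_left m N))]
  have htail : Filter.Tendsto (fun n ↦ ∑ i ∈ range N, f (n + i)) Filter.atTop (nhds 0) := by
    simpa using tendsto_finsetSum (range N) fun i _ ↦ (Filter.tendsto_add_atTop_iff_nat i).2 hlim
  have hpartial (n : ℕ) : ∑ i ∈ range N, f i - ∑ i ∈ range N, f (n + i) =
      ∑ m ∈ range n, (f m - f (N + m)) := by
    have hsum := sum_range_add f N n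
    rw [add_comm N n, sum_range_add] at hsum
    rw [sum_sub_distrib]
    linear_combination -hsum
  simpa only [hpartial, sub_zero] using htail.const_sub (∑ i ∈ range N, f i)

theorem hasSum_inv_sub_inv (N : ℕ) :
    HasSum (fun m : ℕ ↦ ((m : ℝ) + 1)⁻¹ - ((N : ℝ) + (m + 1))⁻¹) (harmonic N) := by
  have hanti : Antitone fun m : ℕ ↦ ((m : ℝ) + 1)⁻¹ := fun m n hmn ↦ by dsimp; gcongr
  have hlim : Filter.Tendsto (fun m : ℕ ↦ ((m : ℝ) + 1)⁻¹) Filter.atTop (nhds 0) := by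
    simpa using tendsto_one_div_add_atTop_nhds_zero_nat (𝕜 := ℝ)
  simpa [harmonic, add_assoc] using hasSum_sub_add_nat_of_antitone hanti hlim N

theorem hasSum_ite_le_mzvTerm_one (q : ℕ) :
    HasSum (fun n ↦ if n ≤ q then mzvTerm ![1] ![n] else 0) (harmonic q) := by
  have h := hasSum_sum_of_ne_finset_zero (s := range (q + 1)) (L := .unconditional ℕ)
    (f := fun n ↦ if n ≤ q then mzvTerm ![1] ![n] else 0) fun n hn ↦ if_neg (by simpa using hn)
  convert h using 1
  rw [sum_range_succ', mzvTerm_one, if_neg (lt_irrefl 0), ite_self, add_zero, harmonic,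
    Rat.cast_sum]
  refine sum_congr rfl fun i hi ↦ ?_
  rw [if_pos (Nat.succ_le_of_lt (mem_range.1 hi)), mzvTerm_one, if_pos i.succ_pos]
  push_cast
  rw [pow_one]

-- Both sides sum `H_q * p ^ -(b + 1) * q ^ -(c + 1)` over `0 < p < q`, where `H_q` is a harmonic
-- number: on the left `H_q` is the sum of `1 / n` over `n ≤ q`, on the right it is the sum of the
-- telescoping series `1 / m - 1 / (q + m)`.
theorem mzv_shuffle_one (b : ℕ) {c : ℕ} (hc : c ≠ 0) :
    mzv 3 ![1, b + 1, c + 1] + mzv 3 ![b + 1, 1, c + 1] + mzv 2 ![1 + (b + 1), c + 1] +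
      mzv 2 ![b + 1, 1 + (c + 1)] = shuffleSum tripleZeta tripleZeta tripleZeta 0 b c := by
  have hleft := ((Equiv.prodComm (ℕ × ℕ) ℕ).hasSum_iff.2 (hasSum_mzvTerm_mul_of_le (a := 1)
    (b := b + 1) (c := c + 1) le_rfl (by omega) (by omega))).prod_fiberwise fun x ↦ by
      simpa [ite_mul] using (hasSum_ite_le_mzvTerm_one x.2).mul_right
        (mzvTerm ![b + 1, c + 1] ![x.1, x.2])
  have hright := ((Equiv.prodComm (ℕ × ℕ) ℕ).hasSum_iff.2
    (hasSum_shuffleSum_tripleZeta 0 b hc)).prod_fiberwise fun x ↦ by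
      refine ((hasSum_inv_sub_inv (x.1 + 1 + (x.2 + 1))).mul_right
        (mzvTerm ![b + 1, c + 1] ![x.1 + 1, x.1 + 1 + (x.2 + 1)])).congr_fun fun m ↦ ?_
      have hpos : 0 < x.1 + 1 ∧ x.1 + 1 < x.1 + 1 + (x.2 + 1) := by omega
      simp only [Function.comp_apply, Equiv.coe_prodComm, Prod.swap_prod_mk, mzvTerm_two,
        if_pos hpos, if_true, gapTerm, zero_add, pow_one, Nat.cast_add, Nat.cast_one, inv_pow]
      ring
  exact ((hasSum_gap_two_iff (f := fun p q ↦ (harmonic q : ℝ) * mzvTerm ![b + 1, c + 1] ![p, q])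
    fun p q hpq ↦ by rw [mzvTerm_two, if_neg hpq, mul_zero]).2 hleft).unique hright

end DoubleShuffle

section GeneratingFunctions

theorem sum_triples_swap_left {M : Type*} [AddCommMonoid M] (d : ℕ) (F : ℕ → ℕ → ℕ → M) :
    ∑ m ∈ triples d, F m.2.1 m.1 m.2.2 = ∑ m ∈ triples d, F m.1 m.2.1 m.2.2 := by
  refine sum_bij' (fun m _ ↦ (m.2.1, m.1, m.2.2)) (fun m _ ↦ (m.2.1, m.1, m.2.2)) ?_ ?_
    (fun _ _ ↦ rfl) (fun _ _ ↦ rfl) (fun _ _ ↦ rfl) <;>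
  · intro m hm
    rw [mem_triples] at hm ⊢
    simp only
    omega

theorem sum_triples_swap_right {M : Type*} [AddCommMonoid M] (d : ℕ) (F : ℕ → ℕ → ℕ → M) :
    ∑ m ∈ triples d, F m.1 m.2.2 m.2.1 = ∑ m ∈ triples d, F m.1 m.2.1 m.2.2 := by
  refine sum_bij' (fun m _ ↦ (m.1, m.2.2, m.2.1)) (fun m _ ↦ (m.1, m.2.2, m.2.1)) ?_ ?_
    (fun _ _ ↦ rfl) (fun _ _ ↦ rfl) (fun _ _ ↦ rfl) <;>
  · intro m hm
    rw [mem_triples] at hm ⊢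
    simp only
    omega

theorem pow_mul_add_pow {R : Type*} [CommSemiring R] (x y : R) (i j : ℕ) :
    x ^ i * (x + y) ^ j =
      ∑ q ∈ antidiagonal (i + j), j.choose q.2 * (x ^ q.1 * y ^ q.2) := by
  induction i with
  | zero =>
    rw [pow_zero, one_mul, zero_add, add_comm, (Commute.all _ _).add_pow',
      ← Nat.sum_antidiagonal_swap]
    refine sum_congr rfl fun q _ ↦ ?_
    rw [nsmul_eq_mul, Prod.fst_swap, Prod.snd_swap, mul_comm (y ^ _)]
  | succ i ih =>
    rw [Nat.succ_add i j, Nat.sum_antidiagonal_succ,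
      Nat.choose_eq_zero_of_lt (by simp only; omega), Nat.cast_zero, zero_mul, zero_add, pow_succ',
      mul_assoc, ih, mul_sum]
    exact sum_congr rfl fun q _ ↦ by ring

variable {R : Type*} [CommRing R]

/-- The effect on the coefficients of a polynomial in `x`, `y`, `z` of the substitution of `x + y`
for `y`. -/
def substCoeff (t : ℕ → ℕ → ℕ → R) (a b c : ℕ) : R :=
  ∑ p ∈ antidiagonal (a + b), p.2.choose b • t p.1 p.2 c

section

variable (d : ℕ) (t : ℕ → ℕ → ℕ → R) (x y z : R)

theorem polyFun_swap_left : polyFun d t y x z = polyFun d (fun a b c ↦ t b a c) x y z := by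
  rw [polyFun_apply, polyFun_apply,
    ← sum_triples_swap_left d fun a b c ↦ t a b c * (y ^ a * x ^ b * z ^ c)]
  exact sum_congr rfl fun m _ ↦ by ring

theorem polyFun_swap_right : polyFun d t x z y = polyFun d (fun a b c ↦ t a c b) x y z := by
  rw [polyFun_apply, polyFun_apply,
    ← sum_triples_swap_right d fun a b c ↦ t a b c * (x ^ a * z ^ b * y ^ c)]
  exact sum_congr rfl fun m _ ↦ by ring

theorem polyFun_subst : polyFun d t x (x + y) z = polyFun d (substCoeff t) x y z := by
  rw [polyFun_apply, polyFun_apply,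
    sum_triples_eq_sum_antidiagonal d fun i j k ↦ t i j k * (x ^ i * (x + y) ^ j * z ^ k),
    sum_triples_eq_sum_antidiagonal d fun i j k ↦ substCoeff t i j k * (x ^ i * y ^ j * z ^ k)]
  refine sum_congr rfl fun p _ ↦ ?_
  have hsubst (q) (hq : q ∈ antidiagonal p.1) :
      substCoeff t q.1 q.2 p.2 * (x ^ q.1 * y ^ q.2 * z ^ p.2) = ∑ r ∈ antidiagonal p.1,
        t r.1 r.2 p.2 * z ^ p.2 * (r.2.choose q.2 * (x ^ q.1 * y ^ q.2)) := by
    rw [substCoeff, HasAntidiagonal.mem_antidiagonal.1 hq, sum_mul]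
    refine sum_congr rfl fun r _ ↦ ?_
    rw [nsmul_eq_mul]
    ring
  rw [sum_congr rfl hsubst, sum_comm]
  refine sum_congr rfl fun r hr ↦ ?_
  rw [← mul_sum, ← HasAntidiagonal.mem_antidiagonal.1 hr, ← pow_mul_add_pow]
  ring

theorem polyFun_shuffleSum :
    polyFun d t x (x + y) (x + z) + polyFun d t y (x + y) (x + z) + polyFun d t y z (x + z) =
      polyFun d (shuffleSum t t t) x y z := by
  have hfst : polyFun d t x (x + y) (x + z) =
      polyFun d (fun a b c ↦ substCoeff (fun a c b ↦ substCoeff t a b c) a c b) x y z := by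
    rw [polyFun_subst, polyFun_swap_right, polyFun_subst, polyFun_swap_right]
  have hsnd : polyFun d t y (x + y) (x + z) =
      polyFun d (fun a b c ↦ substCoeff (fun a c b ↦ substCoeff t b a c) a c b) x y z := by
    rw [add_comm x y, polyFun_subst, polyFun_swap_left, polyFun_swap_right, polyFun_subst,
      polyFun_swap_right]
  have hthd : polyFun d t y z (x + z) =
      polyFun d (fun a b c ↦ substCoeff (fun c a b ↦ t b c a) c a b) x y z := by
    rw [add_comm x z, polyFun_swap_left, polyFun_swap_right, polyFun_subst, polyFun_swap_right,
      polyFun_swap_left, polyFun_swap_right, polyFun_swap_left d _ x y]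
  rw [hfst, hsnd, hthd, polyFun_apply, polyFun_apply, polyFun_apply, polyFun_apply,
    ← sum_add_distrib, ← sum_add_distrib]
  refine sum_congr rfl fun m _ ↦ ?_
  simp only [substCoeff, shuffleSum, smul_add, sum_add_distrib]
  ring

end

/-- The extension of a family of convergent values, those with `k ≠ 0`, to all `i`, `j`, `k` that
satisfies the stuffle relations with divergent words as well. -/
def regularize : (ℕ → ℕ → ℕ → R) →ₗ[R] (ℕ → ℕ → ℕ → R) where
  toFun s i j k :=
    if k ≠ 0 then s i j k else if j ≠ 0 then -s 0 i j - s i 0 j else if i ≠ 0 then s 0 0 i else 0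
  map_add' s t := by
    ext i j k
    simp only [Pi.add_apply]
    split_ifs <;> ring
  map_smul' r s := by
    ext i j k
    simp only [Pi.smul_apply, smul_eq_mul, RingHom.id_apply]
    split_ifs <;> ring

theorem regularize_apply (s : ℕ → ℕ → ℕ → R) (i j k : ℕ) : regularize s i j k =
    if k ≠ 0 then s i j k else if j ≠ 0 then -s 0 i j - s i 0 j else if i ≠ 0 then s 0 0 i else 0 :=
  rfl

theorem regularize_of_ne_zero (s : ℕ → ℕ → ℕ → R) (i j : ℕ) {k : ℕ} (hk : k ≠ 0) :
    regularize s i j k = s i j k := if_pos hk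

theorem convergentPart_regularize (s : ℕ → ℕ → ℕ → R) :
    convergentPart (regularize s) = convergentPart s := by
  funext i j k
  simp only [convergentPart]
  split_ifs with hk
  · rfl
  · exact regularize_of_ne_zero s i j hk

/-- The double shuffle relations of weight `d + 3` and depth three modulo products and lower depth,
for a family indexed by the entries of the triple zeta values diminished by one. Only the convergent
values, those with `k ≠ 0`, enter these relations. -/
structure IsDoubleShuffle (d : ℕ) (s : ℕ → ℕ → ℕ → R) : Prop where
  stuffle {a b c : ℕ} (hd : a + b + c = d) (ha : a ≠ 0) (hc : c ≠ 0) :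
    s a b c + s b a c + s b c a = 0
  shuffle {a b c : ℕ} (hd : a + b + c = d) (ha : a ≠ 0) (hc : c ≠ 0) :
    shuffleSum (convergentPart s) (convergentPart s) (convergentPart s) a b c = 0
  shuffle_one {b c : ℕ} (hd : b + c = d) (hc : c ≠ 0) : s 0 b c + s b 0 c =
    shuffleSum (convergentPart s) (convergentPart s) (convergentPart s) 0 b c

namespace IsDoubleShuffle

variable {d : ℕ} {s : ℕ → ℕ → ℕ → R}

theorem regularize_stuffle (hs : IsDoubleShuffle d s) {a b c : ℕ} (hd : a + b + c = d) :
    regularize s a b c + regularize s b a c + regularize s b c a = 0 := by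
  rcases eq_or_ne c 0 with rfl | hc
  · rcases eq_or_ne a 0 with rfl | ha <;> rcases eq_or_ne b 0 with rfl | hb
    · simp [regularize_apply]
    · simp [regularize_apply, hb]
    · simp [regularize_apply, ha]
    · simp only [regularize_apply, ha, hb, ne_eq, not_true_eq_false, not_false_eq_true, if_true,
        if_false]
      linear_combination -hs.stuffle (a := a) (b := 0) (c := b) (by omega) ha hb
  · rcases eq_or_ne a 0 with rfl | ha
    · simp [regularize_apply, hc]
    · simpa only [regularize_of_ne_zero _ _ _ hc, regularize_of_ne_zero _ _ _ ha] using
        hs.stuffle hd ha hc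

theorem isShuffleZero (hs : IsDoubleShuffle d s) : IsShuffleZero (polyFun d (regularize s)) := by
  intro x y z
  have hlast : polyFun d (regularize s) y z x =
      polyFun d (fun a b c ↦ regularize s b c a) x y z := by
    rw [polyFun_swap_right, polyFun_swap_left]
  rw [hlast, polyFun_swap_left d _ x y]
  simp only [polyFun_apply, ← sum_add_distrib, ← add_mul]
  refine sum_eq_zero fun m hm ↦ ?_
  rw [hs.regularize_stuffle (mem_triples.1 hm), zero_mul]

theorem shuffleSum_regularize (hs : IsDoubleShuffle d s) {a b c : ℕ} (hd : a + b + c = d)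
    (hc : c ≠ 0) : shuffleSum (regularize s) (regularize s) (regularize s) a b c = 0 := by
  rw [shuffleSum_convergentPart _ _ _ _ _ hc, convergentPart_regularize]
  split_ifs with ha
  · subst ha
    rw [← hs.shuffle_one (by omega) hc]
    simp [regularize_apply, hc]
  · rw [hs.shuffle hd ha hc, add_zero]

-- The shuffle relations with a divergent second factor are missing: they concern the coefficients
-- which do not involve the last variable.
theorem isShuffleZero_sharp {K : Type*} [Field K] [CharZero K] {s : ℕ → ℕ → ℕ → K}
    (hs : IsDoubleShuffle d s) : IsShuffleZero (sharp (polyFun d (regularize s))) := by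
  set t := regularize s
  refine isShuffleZero_sharp_of_const hs.isShuffleZero
    (fun x y ↦ polyFun d (shuffleSum t t t) x y 0) fun x y z ↦ ?_
  have hsharp : sharp (polyFun d t) x y z + sharp (polyFun d t) y x z + sharp (polyFun d t) y z x =
      polyFun d (shuffleSum t t t) x y (y + z) := by
    rw [← polyFun_shuffleSum, sharp, sharp, sharp, add_comm y x, add_right_comm x y z,
      show y + z + x = x + (y + z) by ring, show x + z + y = x + (y + z) by ring]
  rw [hsharp, polyFun_apply, polyFun_apply]
  refine sum_congr rfl fun m hm ↦ ?_
  rcases eq_or_ne m.2.2 0 with hm₀ | hm₀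
  · rw [hm₀, pow_zero, pow_zero]
  · rw [hs.shuffleSum_regularize (mem_triples.1 hm) hm₀, zero_mul, zero_mul]

end IsDoubleShuffle

end GeneratingFunctions

section DualBound

open Module

theorem rank_quotient_comap_le_finrank {k E W : Type*} [Field k] [AddCommGroup E] [Module k E]
    [AddCommGroup W] [Module k W] {S V : Submodule k E} (Φ : Dual k E →ₗ[k] W)
    (D : Submodule k W) [Module.Finite k D] (hD : ∀ φ, S ≤ LinearMap.ker φ → Φ φ ∈ D)
    (hV : ∀ φ, S ≤ LinearMap.ker φ → Φ φ = 0 → V ≤ LinearMap.ker φ) :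
    Module.rank k (V ⧸ S.comap V.subtype) ≤ finrank k D := by
  let ι : (V ⧸ S.comap V.subtype) →ₗ[k] E ⧸ S := Submodule.mapQ _ _ V.subtype le_rfl
  have hι : LinearMap.ker ι = ⊥ := by rw [Submodule.ker_mapQ, Submodule.mkQ_map_self]
  obtain ⟨π, hπ⟩ := LinearMap.exists_leftInverse_of_injective ι hι
  have hker (ψ : Dual k (V ⧸ S.comap V.subtype)) :
      S ≤ LinearMap.ker ((π ∘ₗ S.mkQ).dualMap ψ) := by
    intro x hx
    simp [(Submodule.Quotient.mk_eq_zero S).2 hx]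
  let G := (Φ ∘ₗ (π ∘ₗ S.mkQ).dualMap).codRestrict D fun ψ ↦ hD _ (hker ψ)
  have hG : Function.Injective G := by
    rw [← LinearMap.ker_eq_bot, LinearMap.ker_codRestrict, LinearMap.ker_eq_bot']
    intro ψ hψ
    refine Submodule.linearMap_qext _ (LinearMap.ext fun v ↦ ?_)
    have hv : ψ ((π ∘ₗ ι) (Submodule.Quotient.mk v)) = 0 := hV _ (hker ψ) hψ v.2
    rwa [hπ] at hv
  have : Module.Finite k (V ⧸ S.comap V.subtype) :=
    (finite_dual_iff k).1 (Module.Finite.of_injective G hG)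
  rw [← finrank_eq_rank, ← Subspace.dual_finrank_eq]
  exact_mod_cast LinearMap.finrank_le_finrank_of_injective hG

end DualBound

section Monomials

variable {w m w₁ m₁ w₂ m₂ : ℕ} {x y : ℝ}

theorem MZIndex.Admissible.one_le_weight {z : MZIndex} (hz : z.Admissible) : 1 ≤ z.weight :=
  (hz.1 0).trans (single_le_sum (fun _ _ ↦ Nat.zero_le _) (mem_univ 0))

theorem isMonomial_mzv {z : MZIndex} (hz : z.Admissible) :
    IsMonomial (mzv (z.1 + 1) z.2) z.weight z.depth :=
  ⟨0, [z], by simpa using hz, by simp, by simp, by simp⟩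

theorem isMonomial_mzv_one {a : ℕ} (ha : 2 ≤ a) : IsMonomial (mzv 1 ![a]) a 1 := by
  have h := isMonomial_mzv (z := ⟨0, ![a]⟩) ⟨fun i ↦ by fin_cases i; simp; omega, ha⟩
  simpa [MZIndex.weight, MZIndex.depth] using h

theorem isMonomial_mzv_two {a b : ℕ} (ha : 1 ≤ a) (hb : 2 ≤ b) :
    IsMonomial (mzv 2 ![a, b]) (a + b) 2 := by
  have h := isMonomial_mzv (z := ⟨1, ![a, b]⟩) ⟨fun i ↦ by fin_cases i <;> simp <;> omega, hb⟩
  simpa [MZIndex.weight, MZIndex.depth, Fin.sum_univ_succ] using h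

theorem isMonomial_mzv_three {a b c : ℕ} (ha : 1 ≤ a) (hb : 1 ≤ b) (hc : 2 ≤ c) :
    IsMonomial (mzv 3 ![a, b, c]) (a + b + c) 3 := by
  have h := isMonomial_mzv (z := ⟨2, ![a, b, c]⟩) ⟨fun i ↦ by fin_cases i <;> simp <;> omega, hc⟩
  simpa [MZIndex.weight, MZIndex.depth, Fin.sum_univ_succ, add_assoc] using h

theorem IsMonomial.mul (hx : IsMonomial x w₁ m₁) (hy : IsMonomial y w₂ m₂) :
    IsMonomial (x * y) (w₁ + w₂) (m₁ + m₂) := by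
  obtain ⟨a, zs, hzs, rfl, rfl, rfl⟩ := hx
  obtain ⟨b, ys, hys, rfl, rfl, rfl⟩ := hy
  refine ⟨a + b, zs ++ ys, fun z hz ↦ (List.mem_append.1 hz).elim (hzs z) (hys z), ?_, ?_, ?_⟩
  · rw [List.map_append, List.prod_append]
    ring
  · rw [List.map_append, List.sum_append]
    ring
  · rw [List.map_append, List.sum_append]

theorem IsMonomial.mem_Vspan (hx : IsMonomial x w₁ m₁) (hw : w₁ ≤ w) (hm : m₁ ≤ m) :
    x ∈ Vspan w m :=
  Submodule.subset_span ⟨w₁, m₁, hw, hm, hx⟩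

theorem Vspan_mono (hw : w₁ ≤ w) (hm : m₁ ≤ m) : Vspan w₁ m₁ ≤ Vspan w m :=
  Submodule.span_mono fun _ ⟨w₂, m₂, hw₂, hm₂, hx⟩ ↦ ⟨w₂, m₂, hw₂.trans hw, hm₂.trans hm, hx⟩

theorem mul_mem_Vspan (hx : x ∈ Vspan w₁ m₁) (hy : y ∈ Vspan w₂ m₂) :
    x * y ∈ Vspan (w₁ + w₂) (m₁ + m₂) := by
  have hxy := Submodule.mul_mem_mul hx hy
  rw [Vspan, Vspan, Submodule.span_mul_span] at hxy
  refine Submodule.span_le.2 ?_ hxy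
  rintro _ ⟨x, ⟨w₃, m₃, hw₃, hm₃, hx⟩, y, ⟨w₄, m₄, hw₄, hm₄, hy⟩, rfl⟩
  exact (hx.mul hy).mem_Vspan (add_le_add hw₃ hw₄) (add_le_add hm₃ hm₄)

theorem Vspan_pred_weight_le_Sspan (w m : ℕ) : Vspan (w - 1) m ≤ Sspan w m :=
  le_sup_left.trans le_sup_left

theorem Vspan_pred_depth_le_Sspan (w m : ℕ) : Vspan w (m - 1) ≤ Sspan w m :=
  le_sup_right.trans le_sup_left

theorem IsMonomial.mul_mem_Sspan (hx : IsMonomial x w₁ m₁) (hy : IsMonomial y w₂ m₂)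
    (hw₁ : 1 ≤ w₁) (hw₂ : 1 ≤ w₂) (hw : w₁ + w₂ ≤ w) (hm : m₁ + m₂ ≤ m) : x * y ∈ Sspan w m :=
  Submodule.mem_sup_right <| Submodule.mem_iSup_of_mem w₁ <| Submodule.mem_iSup_of_mem w₂ <|
    Submodule.mem_iSup_of_mem m₁ <| Submodule.mem_iSup_of_mem m₂ <|
    Submodule.mem_iSup_of_mem hw₁ <| Submodule.mem_iSup_of_mem hw₂ <|
    Submodule.mem_iSup_of_mem hw <| Submodule.mem_iSup_of_mem hm <| Submodule.subset_span
      ⟨x, hx.mem_Vspan le_rfl le_rfl, y, hy.mem_Vspan le_rfl le_rfl, rfl⟩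

theorem Sspan_le_Vspan (w m : ℕ) : Sspan w m ≤ Vspan w m := by
  refine sup_le
    (sup_le (Vspan_mono (Nat.sub_le _ _) le_rfl) (Vspan_mono le_rfl (Nat.sub_le _ _))) ?_
  simp only [iSup_le_iff]
  intro w₁ w₂ m₁ m₂ _ _ hw hm
  refine Submodule.span_le.2 ?_
  rintro _ ⟨x, hx, y, hy, rfl⟩
  exact Vspan_mono hw hm (mul_mem_Vspan hx hy)

theorem IsMonomial.mem_Sspan_or_eq_mzv (hx : IsMonomial x w m) (hm : m ≠ 0) :
    x ∈ Sspan w m ∨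
      ∃ z : MZIndex, z.Admissible ∧ z.weight = w ∧ z.depth = m ∧ x = mzv (z.1 + 1) z.2 := by
  obtain ⟨a, _ | ⟨z, zs⟩, hadm, rfl, rfl, rfl⟩ := hx
  · simp at hm
  obtain ⟨hz, hzs⟩ := List.forall_mem_cons.1 hadm
  have hrest : IsMonomial (Real.pi ^ (2 * a) * (zs.map fun z ↦ mzv (z.1 + 1) z.2).prod)
      (2 * a + (zs.map MZIndex.weight).sum) (zs.map MZIndex.depth).sum :=
    ⟨a, zs, hzs, rfl, rfl, rfl⟩
  simp only [List.map_cons, List.prod_cons, List.sum_cons, mul_left_comm (Real.pi ^ _)]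
  rcases Nat.eq_zero_or_pos (2 * a + (zs.map MZIndex.weight).sum) with hweight | hweight
  · obtain ⟨rfl, hsum⟩ : a = 0 ∧ (zs.map MZIndex.weight).sum = 0 := by omega
    obtain rfl : zs = [] := List.eq_nil_iff_forall_not_mem.2 fun y hy ↦
      Nat.one_le_iff_ne_zero.1 (hzs y hy).one_le_weight
        (List.sum_eq_zero_iff.1 hsum _ (List.mem_map_of_mem hy))
    exact .inr ⟨z, hz, by simp, by simp, by simp⟩
  · exact .inl ((isMonomial_mzv hz).mul_mem_Sspan hrest hz.one_le_weight hweight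
      (add_left_comm _ _ _).le le_rfl)

theorem Vspan_le_Sspan_sup_span_mzv (w : ℕ) (hm : m ≠ 0) :
    Vspan w m ≤ Sspan w m ⊔ Submodule.span ℚ
      {x | ∃ z : MZIndex, z.Admissible ∧ z.weight = w ∧ z.depth = m ∧ x = mzv (z.1 + 1) z.2} := by
  refine Submodule.span_le.2 ?_
  rintro x ⟨w₁, m₁, hw₁, hm₁, hx⟩
  rcases hw₁.lt_or_eq with hw₁ | rfl
  · exact Submodule.mem_sup_left
      (Vspan_pred_weight_le_Sspan _ _ (hx.mem_Vspan (Nat.le_sub_one_of_lt hw₁) hm₁))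
  rcases hm₁.lt_or_eq with hm₁ | rfl
  · exact Submodule.mem_sup_left
      (Vspan_pred_depth_le_Sspan _ _ (hx.mem_Vspan le_rfl (Nat.le_sub_one_of_lt hm₁)))
  exact (hx.mem_Sspan_or_eq_mzv hm).elim Submodule.mem_sup_left fun h ↦
    Submodule.mem_sup_right (Submodule.subset_span h)

theorem Vspan_three_le_ker {M : Type*} [AddCommGroup M] [Module ℚ M] {φ : ℝ →ₗ[ℚ] M} {d : ℕ}
    (hS : Sspan (d + 3) 3 ≤ LinearMap.ker φ)
    (hφ : ∀ a b c, a + b + c = d → c ≠ 0 → φ (mzv 3 ![a + 1, b + 1, c + 1]) = 0) :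
    Vspan (d + 3) 3 ≤ LinearMap.ker φ := by
  refine (Vspan_le_Sspan_sup_span_mzv _ three_ne_zero).trans (sup_le hS (Submodule.span_le.2 ?_))
  rintro _ ⟨⟨p, n⟩, ⟨hpos, hlast⟩, hweight, hdepth, rfl⟩
  obtain rfl : p = 2 := by simpa [MZIndex.depth] using hdepth
  have hsum : n 0 + n 1 + n 2 = d + 3 := by rwa [MZIndex.weight, Fin.sum_univ_three] at hweight
  have hentry : ∀ i, n i - 1 + 1 = n i := fun i ↦ Nat.sub_add_cancel (hpos i)
  have hn : ![n 0 - 1 + 1, n 1 - 1 + 1, n 2 - 1 + 1] = n := by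
    ext i
    fin_cases i <;> exact hentry _
  have hlast : 2 ≤ n 2 := hlast
  have := hentry 0
  have := hentry 1
  have h := hφ (n 0 - 1) (n 1 - 1) (n 2 - 1) (by omega) (by omega)
  rwa [hn] at h

end Monomials

section OctahedralGeneratingFunction

variable {K : Type*} [Field K] {d : ℕ}

theorem octahedral_mem_dihedralFun {f : K → K → K → K} (hf : f ∈ homogeneousFun K d)
    (hS : IsShuffleZero f) (hT : IsShuffleZero (sharp f)) : octahedral f ∈ dihedralFun K d := by
  have hhom : octahedral f ∈ homogeneousFun K d := by
    have h := homogeneousFun_comp_linearForm hf (0, 1, 1) (1, 1, 0) (1, 0, 1)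
    simp only [linearForm, zero_mul, one_mul, zero_add, add_zero] at h
    exact h
  have hinv : octahedral f ∈ signSwapInvariants K d :=
    ⟨hhom, octahedral_swap hS, octahedral_neg_left hS hT, octahedral_neg_right hS hT⟩
  refine ⟨⟨hinv, ?_⟩, hinv, ?_⟩ <;> ext a b c
  · exact octahedral_cyclic_sum hS a b c
  · exact octahedral_rotated_cyclic_sum hT a b c

theorem eq_zero_of_octahedral_eq_zero [CharZero K] {f : K → K → K → K}
    (h : octahedral f = 0) : f = 0 := by
  funext x y z
  have hxyz : octahedral f ((y + z - x) / 2) ((x + y - z) / 2) ((x + z - y) / 2) = 0 := by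
    rw [h]
    rfl
  rw [Pi.zero_apply, Pi.zero_apply, Pi.zero_apply, ← hxyz, octahedral]
  congr 1 <;> ring

variable (K) in
/-- The generating function, in octahedral coordinates, of the regularization of a family. -/
def octahedralGenFun (d : ℕ) : (ℕ → ℕ → ℕ → K) →ₗ[K] (K → K → K → K) where
  toFun s := octahedral (polyFun d (regularize s))
  map_add' s t := by
    rw [map_add, map_add]
    rfl
  map_smul' r s := by
    rw [map_smul, map_smul]
    rfl

theorem IsDoubleShuffle.octahedralGenFun_mem_dihedralFun [CharZero K] {s : ℕ → ℕ → ℕ → K}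
    (hs : IsDoubleShuffle d s) : octahedralGenFun K d s ∈ dihedralFun K d :=
  octahedral_mem_dihedralFun (polyFun_mem_homogeneousFun d _) hs.isShuffleZero
    hs.isShuffleZero_sharp

theorem eq_zero_of_octahedralGenFun_eq_zero [CharZero K] {s : ℕ → ℕ → ℕ → K}
    (h : octahedralGenFun K d s = 0) {a b c : ℕ} (hd : a + b + c = d) (hc : c ≠ 0) :
    s a b c = 0 := by
  rw [← regularize_of_ne_zero s a b hc]
  exact coeff_eq_zero_of_polyFun_eq_zero (eq_zero_of_octahedral_eq_zero h) hd

end OctahedralGeneratingFunction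

section DepthThree

variable {d : ℕ} {φ : Module.Dual ℚ ℝ}

/-- The values of a functional on the triple zeta values, indexed by the entries diminished by
one. -/
noncomputable def zetaValues : Module.Dual ℚ ℝ →ₗ[ℚ] (ℕ → ℕ → ℕ → ℚ) where
  toFun φ i j k := φ (mzv 3 ![i + 1, j + 1, k + 1])
  map_add' _ _ := rfl
  map_smul' _ _ := rfl

theorem zetaValues_apply (φ : Module.Dual ℚ ℝ) (i j k : ℕ) :
    zetaValues φ i j k = φ (mzv 3 ![i + 1, j + 1, k + 1]) := rfl

theorem shuffleSum_zetaValues (φ : Module.Dual ℚ ℝ) (a b c : ℕ) :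
    shuffleSum (convergentPart (zetaValues φ)) (convergentPart (zetaValues φ))
      (convergentPart (zetaValues φ)) a b c =
      φ (shuffleSum tripleZeta tripleZeta tripleZeta a b c) := by
  have h : convergentPart (zetaValues φ) = fun i j k ↦ φ.toAddMonoidHom (tripleZeta i j k) := by
    funext i j k
    simp only [convergentPart, tripleZeta, zetaValues_apply, LinearMap.toAddMonoidHom_coe]
    split_ifs <;> simp
  rw [h]
  exact (map_shuffleSum φ.toAddMonoidHom _ _ _ a b c).symm

theorem apply_mzv_two_eq_zero (hφ : Sspan (d + 3) 3 ≤ LinearMap.ker φ) {a b : ℕ} (ha : 1 ≤ a)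
    (hb : 2 ≤ b) (hd : a + b ≤ d + 3) : φ (mzv 2 ![a, b]) = 0 :=
  hφ (Vspan_pred_depth_le_Sspan _ _ ((isMonomial_mzv_two ha hb).mem_Vspan hd le_rfl))

theorem apply_mzv_one_mul_mzv_two_eq_zero (hφ : Sspan (d + 3) 3 ≤ LinearMap.ker φ) {a b c : ℕ}
    (ha : 2 ≤ a) (hb : 1 ≤ b) (hc : 2 ≤ c) (hd : a + (b + c) ≤ d + 3) :
    φ (mzv 1 ![a] * mzv 2 ![b, c]) = 0 :=
  hφ ((isMonomial_mzv_one ha).mul_mem_Sspan (isMonomial_mzv_two hb hc) (by omega) (by omega) hd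
    le_rfl)

theorem isDoubleShuffle_zetaValues (hφ : Sspan (d + 3) 3 ≤ LinearMap.ker φ) :
    IsDoubleShuffle d (zetaValues φ) where
  stuffle {a b c} hd ha hc := by
    have h := congrArg φ (mzv_stuffle (a := a + 1) (b := b + 1) (c := c + 1) (by omega) (by omega)
      (by omega))
    simp only [map_add] at h
    rw [apply_mzv_one_mul_mzv_two_eq_zero hφ (by omega) (by omega) (by omega) (by omega),
      apply_mzv_two_eq_zero hφ (by omega) (by omega) (by omega),
      apply_mzv_two_eq_zero hφ (by omega) (by omega) (by omega), add_zero, add_zero] at h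
    exact h.symm
  shuffle {a b c} hd ha hc := by
    rw [shuffleSum_zetaValues, ← mzv_shuffle ha b hc]
    exact apply_mzv_one_mul_mzv_two_eq_zero hφ (by omega) (by omega) (by omega) (by omega)
  shuffle_one {b c} hd hc := by
    rw [shuffleSum_zetaValues, ← mzv_shuffle_one b hc]
    simp only [map_add]
    rw [apply_mzv_two_eq_zero hφ (by omega) (by omega) (by omega),
      apply_mzv_two_eq_zero hφ (by omega) (by omega) (by omega), add_zero, add_zero]
    rfl

theorem rank_Vspan_quotient_Sspan_le (d : ℕ) :
    Module.rank ℚ (↥(Vspan (d + 3) 3) ⧸ (Sspan (d + 3) 3).comap (Vspan (d + 3) 3).subtype) ≤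
      Module.finrank ℚ (dihedralFun ℚ d) :=
  rank_quotient_comap_le_finrank (octahedralGenFun ℚ d ∘ₗ zetaValues) (dihedralFun ℚ d)
    (fun _ hφ ↦ (isDoubleShuffle_zetaValues hφ).octahedralGenFun_mem_dihedralFun)
    fun _ hφ hzero ↦ Vspan_three_le_ker hφ fun _ _ _ hd hc ↦
      eq_zero_of_octahedralGenFun_eq_zero hzero hd hc

theorem Vspan_eq_Sspan_of_odd (hd : Odd d) : Vspan (d + 3) 3 = Sspan (d + 3) 3 := by
  refine le_antisymm ?_ (Sspan_le_Vspan _ _)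
  have hrank := rank_Vspan_quotient_Sspan_le d
  rw [dihedralFun_eq_bot_of_odd hd, finrank_bot, Nat.cast_zero, nonpos_iff_eq_zero,
    rank_zero_iff, Submodule.Quotient.subsingleton_iff] at hrank
  exact Submodule.comap_subtype_eq_top.1 hrank

end DepthThree

/-- Goncharov's depth-3 theorem: (a) if `w` is even then `V_{w,3} = S_{w,3}`, and in particular
every triple zeta value of weight `w` lies in `S_{w,3}`; (b) if `w ≥ 5` is odd then
`dim_ℚ V_{w,3}/S_{w,3} ≤ ⌊((w−3)²−1)/48⌋`. -/
theorem stmt5 (w : ℕ) (hw : 3 ≤ w) :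
    (Even w → Vspan w 3 = Sspan w 3 ∧
      ∀ a b c : ℕ, 1 ≤ a → 1 ≤ b → 2 ≤ c → a + b + c = w →
        mzv 3 ![a, b, c] ∈ Sspan w 3) ∧
    (Odd w → 5 ≤ w →
      Module.rank ℚ (↥(Vspan w 3) ⧸ (Sspan w 3).comap (Vspan w 3).subtype) ≤
        (((w - 3) ^ 2 - 1) / 48 : ℕ)) := by
  obtain ⟨d, rfl⟩ : ∃ d, w = d + 3 := ⟨w - 3, by omega⟩
  refine ⟨fun hw ↦ ?_, fun hw hw5 ↦ ?_⟩
  · have hd : Odd d := by grind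
    rw [← Vspan_eq_Sspan_of_odd hd]
    exact ⟨rfl, fun a b c ha hb hc h ↦ (isMonomial_mzv_three ha hb hc).mem_Vspan h.le le_rfl⟩
  · obtain ⟨e, rfl⟩ : ∃ e, d = 2 * e := ⟨d / 2, by grind⟩
    refine (rank_Vspan_quotient_Sspan_le _).trans ?_
    rw [Nat.add_sub_cancel]
    exact_mod_cast finrank_dihedralFun_le (by omega : e ≠ 0)
end

section
/- Let k, l ≥ 1 be integers and let f_1,…,f_k, g_1,…,g_l : [0,1] → ℝ be continuous functions. Define h_1,…,h_{k+l} by h_i := f_i for 1 ≤ i ≤ k and h_{k+i} := g_i for 1 ≤ i ≤ l. Then (∫_{0<t_1<⋯<t_k<1} ∏_{i=1}^{k} f_i(t_i) dt_1⋯dt_k) · (∫_{0<s_1<⋯<s_l<1} ∏_{j=1}^{l} g_j(s_j) ds_1⋯ds_l) = Σ_{σ ∈ Σ_{k,l}} ∫_{0<u_1<⋯<u_{k+l}<1} ∏_{j=1}^{k+l} h_{σ(j)}(u_j) du_1⋯du_{k+l}. -/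
open MeasureTheory

/-- The set of `(k, n−k)`-shuffles: permutations `σ` of `{0,…,n−1}` such that
`σ⁻¹` is increasing on the first `k` letters and on the last `n−k` letters. -/
def shuffles (n k : ℕ) : Finset (Equiv.Perm (Fin n)) :=
  Finset.univ.filter fun σ =>
    (∀ i j : Fin n, (i : ℕ) < (j : ℕ) → (j : ℕ) < k → σ⁻¹ i < σ⁻¹ j) ∧
    (∀ i j : Fin n, (i : ℕ) < (j : ℕ) → k ≤ (i : ℕ) → σ⁻¹ i < σ⁻¹ j)

/-- The open simplex `{0 < t_1 < ⋯ < t_p < 1}` in `ℝ^p`. -/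
def simplex01 (p : ℕ) : Set (Fin p → ℝ) :=
  {t | StrictMono t ∧ ∀ i, t i ∈ Set.Ioo (0 : ℝ) 1}

/-!
Off the null set of tuples with a repeated coordinate, a pair of increasing tuples can be sorted
into a single increasing tuple, and the permutation that does the sorting is a shuffle precisely
because each of the two tuples was already increasing. The product of two simplices is therefore,
up to a null set, the disjoint union of the chambers `v (σ 0) < v (σ 1) < ⋯` over all shuffles `σ`,
and permuting the variables carries each chamber to the simplex. Replacing Lebesgue measure by its
restriction to `(0, 1)` absorbs the condition on the range, so only the order of the coordinates
plays a role.
-/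

section Chambers

variable {α : Type*} [LinearOrder α] {n k l : ℕ}

variable (α) in
/-- The chamber of tuples whose coordinates are listed in increasing order by `σ`, as in
`v (σ 0) < v (σ 1) < ⋯`; chambers are the pieces into which products of simplices are cut. -/
def chamber (σ : Equiv.Perm (Fin n)) : Set (Fin n → α) :=
  {v | StrictMono (v ∘ σ)}

variable (α k l) in
/-- The product of the simplex of increasing `k`-tuples with that of increasing `l`-tuples, encoded
as a set of `(k + l)`-tuples. -/
def prodSimplex : Set (Fin (k + l) → α) :=
  {v | StrictMono (v ∘ Fin.castAdd l) ∧ StrictMono (v ∘ Fin.natAdd k)}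

lemma append_mem_prodSimplex {t : Fin k → α} {s : Fin l → α} :
    Fin.append t s ∈ prodSimplex α k l ↔ StrictMono t ∧ StrictMono s := by
  simp only [prodSimplex, Set.mem_ofPred_eq, Function.comp_def, Fin.append_left, Fin.append_right]

lemma lt_iff_of_mem_chamber {σ : Equiv.Perm (Fin n)} {v : Fin n → α} (hv : v ∈ chamber α σ)
    (i j : Fin n) : v i < v j ↔ σ⁻¹ i < σ⁻¹ j := by
  simpa using hv.lt_iff_lt (a := σ⁻¹ i) (b := σ⁻¹ j)

lemma mem_chamber_sort {v : Fin n → α} (hv : Function.Injective v) :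
    v ∈ chamber α (Tuple.sort v) :=
  (Tuple.monotone_sort v).strictMono_of_injective (hv.comp (Tuple.sort v).injective)

lemma pairwise_disjoint_chamber :
    Pairwise (Function.onFun Disjoint (chamber α (n := n))) := by
  refine fun σ τ hne => Set.disjoint_left.2 fun v hσ hτ => hne ?_
  have hv : Function.Injective v := (Function.Injective.of_comp_iff' v σ.bijective).1 hσ.injective
  exact DFunLike.coe_injective <|
    hv.comp_left <| Tuple.unique_monotone hσ.monotone hτ.monotone

lemma mem_shuffles_iff {σ : Equiv.Perm (Fin (k + l))} :
    σ ∈ shuffles (k + l) k ↔ ⇑σ⁻¹ ∈ prodSimplex (Fin (k + l)) k l := by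
  have hcross (i : Fin k) (j : Fin l) : ¬ Fin.natAdd k j < Fin.castAdd l i := by
    simp only [Fin.lt_def, Fin.val_natAdd, Fin.val_castAdd]
    omega
  simp [shuffles, prodSimplex, StrictMono, Fin.forall_fin_add, hcross,
    (Fin.strictMono_castAdd l).lt_iff_lt]

lemma mem_prodSimplex_iff_of_mem_chamber {σ : Equiv.Perm (Fin (k + l))} {v : Fin (k + l) → α}
    (hv : v ∈ chamber α σ) : v ∈ prodSimplex α k l ↔ σ ∈ shuffles (k + l) k := by
  simp only [mem_shuffles_iff, prodSimplex, Set.mem_ofPred_eq, StrictMono, Function.comp_apply,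
    lt_iff_of_mem_chamber hv]

lemma mem_prodSimplex_iff_of_injective {v : Fin (k + l) → α} (hv : Function.Injective v) :
    v ∈ prodSimplex α k l ↔ ∃ σ ∈ shuffles (k + l) k, v ∈ chamber α σ := by
  refine ⟨fun h => ⟨Tuple.sort v, ?_, mem_chamber_sort hv⟩, ?_⟩
  · exact (mem_prodSimplex_iff_of_mem_chamber (mem_chamber_sort hv)).1 h
  · rintro ⟨σ, hσ, hvσ⟩
    exact (mem_prodSimplex_iff_of_mem_chamber hvσ).2 hσ

end Chambers

section PiMeasure

variable {α : Type*} [MeasurableSpace α]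

variable (α) in
/-- Concatenation of tuples as a measurable equivalence, used to view a product of integrals as a
single integral. -/
def appendMeasurableEquiv (k l : ℕ) :
    (Fin k → α) × (Fin l → α) ≃ᵐ (Fin (k + l) → α) where
  toEquiv := Fin.appendEquiv k l
  measurable_toFun := by
    refine measurable_pi_lambda _ (Fin.addCases (fun i => ?_) fun j => ?_)
    · simpa [Fin.appendEquiv, Function.comp_def] using (measurable_pi_apply i).comp measurable_fst
    · simpa [Fin.appendEquiv, Function.comp_def] using (measurable_pi_apply j).comp measurable_snd
  measurable_invFun :=
    (measurable_pi_lambda _ fun i => measurable_pi_apply (Fin.castAdd l i)).prodMk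
      (measurable_pi_lambda _ fun j => measurable_pi_apply (Fin.natAdd k j))

lemma appendMeasurableEquiv_apply {k l : ℕ} (p : (Fin k → α) × (Fin l → α)) :
    appendMeasurableEquiv α k l p = Fin.append p.1 p.2 :=
  rfl

lemma measurePreserving_appendMeasurableEquiv {k l : ℕ} (μ : Fin (k + l) → Measure α)
    [∀ i, SigmaFinite (μ i)] :
    MeasurePreserving (appendMeasurableEquiv α k l)
      ((Measure.pi fun i => μ (Fin.castAdd l i)).prod (Measure.pi fun j => μ (Fin.natAdd k j)))
      (Measure.pi μ) := by
  refine ⟨MeasurableEquiv.measurable _, (Measure.pi_eq fun s _ => ?_).symm⟩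
  have hpre : appendMeasurableEquiv α k l ⁻¹' Set.univ.pi s =
      (Set.univ.pi fun i => s (Fin.castAdd l i)) ×ˢ Set.univ.pi fun j => s (Fin.natAdd k j) := by
    ext p
    simp [appendMeasurableEquiv_apply, Fin.forall_fin_add]
  rw [MeasurableEquiv.map_apply, hpre, Measure.prod_prod, Measure.pi_pi, Measure.pi_pi,
    Fin.prod_univ_add]

lemma ae_eval_ne_eval {ι : Type*} [Fintype ι] [MeasurableEq α] (μ : ι → Measure α)
    [∀ i, SigmaFinite (μ i)] {i j : ι} [NullSingletonClass (μ i)] (hij : i ≠ j) :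
    ∀ᵐ v ∂Measure.pi μ, v i ≠ v j := by
  classical
  have hmeas : MeasurableSet {v : ι → α | v i = v j} :=
    measurableSet_eq_fun (measurable_pi_apply i) (measurable_pi_apply j)
  have hnull : Measure.pi μ {v | v i = v j} = 0 := by
    rw [← lintegral_indicator_one hmeas, ← lintegral_zero]
    refine lintegral_eq_of_lmarginal_eq {i} (measurable_one.indicator hmeas) measurable_const ?_
    ext v
    have hslice (x : α) : {w : ι → α | w i = w j}.indicator (1 : (ι → α) → ENNReal)
        (Function.update v i x) = ({v j} : Set α).indicator 1 x := by
      simp [Set.indicator_apply, hij.symm]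
    simp only [lmarginal_singleton, hslice, lintegral_indicator_one (measurableSet_singleton (v j)),
      measure_singleton, lintegral_zero]
  simpa [ae_iff] using hnull

lemma ae_injective {ι : Type*} [Fintype ι] [MeasurableEq α] (μ : ι → Measure α)
    [∀ i, SigmaFinite (μ i)] [∀ i, NullSingletonClass (μ i)] :
    ∀ᵐ v ∂Measure.pi μ, Function.Injective v := by
  have hne : ∀ᵐ v ∂Measure.pi μ, ∀ i j, i ≠ j → v i ≠ v j :=
    ae_all_iff.2 fun i => ae_all_iff.2 fun j => by
      by_cases hij : i = j
      · simp [hij]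
      · simpa [hij] using ae_eval_ne_eval μ hij
  filter_upwards [hne] with v hv i j using not_imp_not.1 (hv i j)

end PiMeasure

section Shuffle

variable {α : Type*} [LinearOrder α] [MeasurableSpace α] (μ : Measure α) [SigmaFinite μ]
  {𝕜 : Type*} [RCLike 𝕜]

lemma setIntegral_chamber_prod {n : ℕ} (σ : Equiv.Perm (Fin n)) (h : Fin n → α → 𝕜) :
    ∫ v in chamber α σ, ∏ i, h i (v i) ∂Measure.pi (fun _ => μ) =
      ∫ u in {u | StrictMono u}, ∏ j, h (σ j) (u j) ∂Measure.pi (fun _ => μ) := by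
  let e : (Fin n → α) ≃ᵐ (Fin n → α) := .arrowCongr' σ.symm (.refl α)
  have he : MeasurePreserving e (Measure.pi fun _ => μ) (Measure.pi fun _ => μ) :=
    measurePreserving_arrowCongr' _ _ _ _ fun _ => .id μ
  have hprod (v : Fin n → α) : ∏ i, h i (v i) = ∏ j, h (σ j) (e v j) :=
    (Equiv.prod_comp σ fun i => h i (v i)).symm
  simp only [hprod]
  exact he.setIntegral_preimage_emb e.measurableEmbedding (fun u => ∏ j, h (σ j) (u j))
    {u | StrictMono u}

lemma setIntegral_prodSimplex_prod {k l : ℕ} (f : Fin k → α → 𝕜) (g : Fin l → α → 𝕜) :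
    ∫ v in prodSimplex α k l, ∏ i, Fin.append f g i (v i) ∂Measure.pi (fun _ => μ) =
      (∫ t in {t | StrictMono t}, ∏ i, f i (t i) ∂Measure.pi (fun _ => μ)) *
        ∫ s in {s | StrictMono s}, ∏ j, g j (s j) ∂Measure.pi (fun _ => μ) := by
  have hpre : appendMeasurableEquiv α k l ⁻¹' prodSimplex α k l =
      {t | StrictMono t} ×ˢ {s | StrictMono s} :=
    Set.ext fun _ => append_mem_prodSimplex
  rw [← (measurePreserving_appendMeasurableEquiv fun _ => μ).setIntegral_preimage_emb
    (MeasurableEquiv.measurableEmbedding _), hpre, ← setIntegral_prod_mul]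
  simp only [appendMeasurableEquiv_apply, Fin.prod_univ_add, Fin.append_left, Fin.append_right]

variable [TopologicalSpace α] [OrderClosedTopology α] [SecondCountableTopology α]
  [OpensMeasurableSpace α]

lemma measurableSet_strictMono_comp {ι κ : Type*} [Countable ι] [Preorder ι] (e : ι → κ) :
    MeasurableSet {v : κ → α | StrictMono (v ∘ e)} := by
  simp only [StrictMono, Set.ofPred_forall]
  exact .iInter fun i => .iInter fun j => .iInter fun _ =>
    measurableSet_lt (measurable_pi_apply (e i)) (measurable_pi_apply (e j))

lemma prodSimplex_ae_eq_biUnion_chamber [NullSingletonClass μ] (k l : ℕ) :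
    prodSimplex α k l =ᵐ[Measure.pi fun _ => μ] ⋃ σ ∈ shuffles (k + l) k, chamber α σ := by
  refine Filter.eventuallyEq_set.2 ?_
  filter_upwards [ae_injective fun _ => μ] with v hv
  simpa only [Set.mem_iUnion₂, exists_prop] using mem_prodSimplex_iff_of_injective hv

theorem stmt10_general [NullSingletonClass μ] {k l : ℕ} {f : Fin k → α → 𝕜} {g : Fin l → α → 𝕜}
    (hf : ∀ i, Integrable (f i) μ) (hg : ∀ j, Integrable (g j) μ) :
    (∫ t in {t | StrictMono t}, ∏ i, f i (t i) ∂Measure.pi (fun _ => μ)) *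
        (∫ s in {s | StrictMono s}, ∏ j, g j (s j) ∂Measure.pi (fun _ => μ)) =
      ∑ σ ∈ shuffles (k + l) k,
        ∫ u in {u | StrictMono u}, ∏ j, Fin.append f g (σ j) (u j) ∂Measure.pi (fun _ => μ) := by
  have hfg : ∀ i, Integrable (Fin.append f g i) μ := by
    simpa [Fin.forall_fin_add] using ⟨hf, hg⟩
  rw [← setIntegral_prodSimplex_prod,
    setIntegral_congr_set (prodSimplex_ae_eq_biUnion_chamber μ k l),
    integral_biUnion_finset (s := chamber α) _ (fun σ _ => measurableSet_strictMono_comp σ)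
      (pairwise_disjoint_chamber.set_pairwise _)
      fun σ _ => (Integrable.fintype_prod hfg).integrableOn]
  exact Finset.sum_congr rfl fun σ _ => setIntegral_chamber_prod μ σ _

end Shuffle

lemma setIntegral_simplex01 {E : Type*} [NormedAddCommGroup E] [NormedSpace ℝ E] {p : ℕ}
    (F : (Fin p → ℝ) → E) :
    ∫ t in simplex01 p, F t =
      ∫ t in {t | StrictMono t}, F t ∂Measure.pi fun _ => volume.restrict (Set.Ioo 0 1) := by
  have hset : simplex01 p = {t | StrictMono t} ∩ Set.univ.pi fun _ => Set.Ioo 0 1 := by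
    ext t
    simp [simplex01, Set.mem_pi]
  have hmeas : MeasurableSet {t : Fin p → ℝ | StrictMono t} := measurableSet_strictMono_comp id
  rw [← Measure.restrict_pi_pi, ← volume_pi, Measure.restrict_restrict hmeas, hset]

/-- The shuffle product formula for iterated integrals of continuous functions. -/
theorem stmt10 (k l : ℕ) (hk : 1 ≤ k) (hl : 1 ≤ l)
    (f : Fin k → ℝ → ℝ) (g : Fin l → ℝ → ℝ)
    (hf : ∀ i, ContinuousOn (f i) (Set.Icc 0 1))
    (hg : ∀ j, ContinuousOn (g j) (Set.Icc 0 1)) :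
    (∫ t in simplex01 k, ∏ i, f i (t i)) * (∫ s in simplex01 l, ∏ j, g j (s j)) =
      ∑ σ ∈ shuffles (k + l) k,
        ∫ u in simplex01 (k + l), ∏ j, Fin.append f g (σ j) (u j) := by
  simpa only [setIntegral_simplex01] using stmt10_general (volume.restrict (Set.Ioo 0 1))
    (fun i => (hf i).integrableOn_Icc.mono_set Set.Ioo_subset_Icc_self)
    (fun j => (hg j).integrableOn_Icc.mono_set Set.Ioo_subset_Icc_self)
end
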